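/- arXiv:2407.08031 — 2 statements merged into one kernel-verified Lean document; each statement's English description precedes it below -/
import Mathlib

section
/- Let γ, δ₀ and the test measures be as in the space curve setup, and write x₀ = γ(0) and R = R(0) = 1/‖γ''(0)‖. Then there exist constants C > 0 and δ₁ ∈ (0, δ₀] such that for all δ ∈ (0, δ₁] and all σ, ε > 0 with max(σ, ε) ≤ δ/4, writing y = γ(δ), one has | W₁(μ_{x₀}^{σ,ε}, μ_y^{σ,ε}) − ‖x₀ − y‖·(1 + σ²/(4R²) − ε²/(6R²)) | ≤ C·δ⁴. -/
open MeasureTheory Set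

/-- The 1-Wasserstein distance: infimum over couplings of the integral of the distance. -/
noncomputable def W1 {X : Type*} [MeasurableSpace X] [PseudoMetricSpace X]
    (μ ν : Measure X) : ℝ :=
  sInf { c : ℝ | ∃ π : Measure (X × X), IsProbabilityMeasure π ∧
      π.map Prod.fst = μ ∧ π.map Prod.snd = ν ∧ c = ∫ p, dist p.1 p.2 ∂π }

/-- Restriction of the ambient volume measure to a set, normalized to a probability measure. -/
noncomputable def normRestrict {X : Type*} [MeasureSpace X] (s : Set X) : Measure X :=
  (volume s)⁻¹ • volume.restrict s

/-- The cross product on Euclidean 3-space. -/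
noncomputable def cross3 (u v : EuclideanSpace ℝ (Fin 3)) : EuclideanSpace ℝ (Fin 3) :=
  (WithLp.equiv 2 (Fin 3 → ℝ)).symm
    ![(WithLp.equiv 2 (Fin 3 → ℝ) u) 1 * (WithLp.equiv 2 (Fin 3 → ℝ) v) 2 -
        (WithLp.equiv 2 (Fin 3 → ℝ) u) 2 * (WithLp.equiv 2 (Fin 3 → ℝ) v) 1,
      (WithLp.equiv 2 (Fin 3 → ℝ) u) 2 * (WithLp.equiv 2 (Fin 3 → ℝ) v) 0 -
        (WithLp.equiv 2 (Fin 3 → ℝ) u) 0 * (WithLp.equiv 2 (Fin 3 → ℝ) v) 2,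
      (WithLp.equiv 2 (Fin 3 → ℝ) u) 0 * (WithLp.equiv 2 (Fin 3 → ℝ) v) 1 -
        (WithLp.equiv 2 (Fin 3 → ℝ) u) 1 * (WithLp.equiv 2 (Fin 3 → ℝ) v) 0]

local notation "E3" => EuclideanSpace ℝ (Fin 3)

lemma W1_le_of_maps {X Ω : Type*} [MeasurableSpace X] [PseudoMetricSpace X]
    [MeasurableSpace Ω] (ν : Measure Ω) [IsProbabilityMeasure ν] (A B : Ω → X)
    (hA : Measurable A) (hB : Measurable B)
    (hd : Measurable (fun p : X × X => dist p.1 p.2)) :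
    W1 (ν.map A) (ν.map B) ≤ ∫ p, dist (A p) (B p) ∂ν := by
  have hAB : Measurable (fun p => (A p, B p)) := hA.prodMk hB
  apply csInf_le
  · refine ⟨0, ?_⟩
    rintro c ⟨π, _, _, _, rfl⟩
    exact integral_nonneg (fun _ => dist_nonneg)
  · refine ⟨ν.map (fun p => (A p, B p)), Measure.isProbabilityMeasure_map hAB.aemeasurable,
      ?_, ?_, ?_⟩
    · rw [Measure.map_map measurable_fst hAB]; rfl
    · rw [Measure.map_map measurable_snd hAB]; rfl
    · rw [integral_map hAB.aemeasurable hd.aestronglyMeasurable]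

lemma le_W1_of_maps {E Ω : Type*} [NormedAddCommGroup E] [InnerProductSpace ℝ E]
    [MeasurableSpace E] [BorelSpace E] [SecondCountableTopology E]
    [MeasurableSpace Ω] (ν : Measure Ω) [IsProbabilityMeasure ν] (A B : Ω → E)
    (hA : Measurable A) (hB : Measurable B) (K : ℝ) (hKA : ∀ᵐ p ∂ν, ‖A p‖ ≤ K)
    (hKB : ∀ᵐ p ∂ν, ‖B p‖ ≤ K) (u : E) (hu : ‖u‖ = 1) :
    ∫ p, inner ℝ (B p - A p) u ∂ν ≤ W1 (ν.map A) (ν.map B) := by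
  have hAB : Measurable (fun p => (A p, B p)) := hA.prodMk hB
  apply le_csInf
  · refine ⟨_, ν.map (fun p => (A p, B p)), Measure.isProbabilityMeasure_map hAB.aemeasurable,
      ?_, ?_, rfl⟩
    · rw [Measure.map_map measurable_fst hAB]; rfl
    · rw [Measure.map_map measurable_snd hAB]; rfl
  · rintro c ⟨π, hπ, h1, h2, rfl⟩
    have hms : MeasurableSet {z : E | ‖z‖ ≤ K} := measurableSet_le measurable_norm measurable_const
    have b1 : ∀ᵐ q ∂π, ‖q.1‖ ≤ K := by
      have : ∀ᵐ z ∂(π.map Prod.fst), ‖z‖ ≤ K := by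
        rw [h1]; exact (ae_map_iff hA.aemeasurable hms).2 hKA
      exact (ae_map_iff measurable_fst.aemeasurable hms).1 this
    have b2 : ∀ᵐ q ∂π, ‖q.2‖ ≤ K := by
      have : ∀ᵐ z ∂(π.map Prod.snd), ‖z‖ ≤ K := by
        rw [h2]; exact (ae_map_iff hB.aemeasurable hms).2 hKB
      exact (ae_map_iff measurable_snd.aemeasurable hms).1 this
    have cin : Continuous (fun z : E => inner ℝ z u) := by fun_prop
    have i1 : Integrable (fun q : E × E => inner ℝ q.1 u) π := by
      refine Integrable.of_bound (C := K) ?_ ?_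
      · exact (cin.comp continuous_fst).measurable.aestronglyMeasurable
      · filter_upwards [b1] with q hq
        exact (norm_inner_le_norm _ _).trans (by rw [hu, mul_one]; exact hq)
    have i2 : Integrable (fun q : E × E => inner ℝ q.2 u) π := by
      refine Integrable.of_bound (C := K) ?_ ?_
      · exact (cin.comp continuous_snd).measurable.aestronglyMeasurable
      · filter_upwards [b2] with q hq
        exact (norm_inner_le_norm _ _).trans (by rw [hu, mul_one]; exact hq)
    have i3 : Integrable (fun q : E × E => dist q.1 q.2) π := by
      refine Integrable.of_bound (C := K + K) ?_ ?_
      · exact (continuous_fst.dist continuous_snd).measurable.aestronglyMeasurable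
      · filter_upwards [b1, b2] with q hq1 hq2
        rw [Real.norm_of_nonneg dist_nonneg, dist_eq_norm]
        exact (norm_sub_le _ _).trans (add_le_add hq1 hq2)
    have j1 : Integrable (fun p => inner ℝ (A p) u) ν := by
      refine Integrable.of_bound (C := K) ?_ ?_
      · exact (cin.measurable.comp hA).aestronglyMeasurable
      · filter_upwards [hKA] with q hq
        exact (norm_inner_le_norm _ _).trans (by rw [hu, mul_one]; exact hq)
    have j2 : Integrable (fun p => inner ℝ (B p) u) ν := by
      refine Integrable.of_bound (C := K) ?_ ?_
      · exact (cin.measurable.comp hB).aestronglyMeasurable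
      · filter_upwards [hKB] with q hq
        exact (norm_inner_le_norm _ _).trans (by rw [hu, mul_one]; exact hq)
    have e1 : ∫ p, inner ℝ (A p) u ∂ν = ∫ q, inner ℝ q.1 u ∂π := by
      rw [← integral_map hA.aemeasurable (f := fun z => inner ℝ z u)
        cin.measurable.aestronglyMeasurable, ← h1,
        integral_map measurable_fst.aemeasurable cin.measurable.aestronglyMeasurable]
    have e2 : ∫ p, inner ℝ (B p) u ∂ν = ∫ q, inner ℝ q.2 u ∂π := by
      rw [← integral_map hB.aemeasurable (f := fun z => inner ℝ z u)
        cin.measurable.aestronglyMeasurable, ← h2,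
        integral_map measurable_snd.aemeasurable cin.measurable.aestronglyMeasurable]
    simp_rw [inner_sub_left]
    rw [integral_sub j2 j1, e1, e2, ← integral_sub i2 i1]
    refine integral_mono (i2.sub i1) i3 (fun q => ?_)
    simp only
    rw [← inner_sub_left, dist_eq_norm, norm_sub_rev]
    exact (real_inner_le_norm _ _).trans (by rw [hu, mul_one])

lemma norm_le_par {E : Type*} [NormedAddCommGroup E] [InnerProductSpace ℝ E] (u v : E)
    (hu : ‖u‖ = 1) (l m q : ℝ) (hm : 0 < m) (ha : m ≤ inner ℝ v u) (hq : ‖v - l • u‖ ≤ q) :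
    ‖v‖ ≤ inner ℝ v u + q ^ 2 / m := by
  set a := inner ℝ v u with ha'
  have h1 : ‖v - l • u‖ ^ 2 = ‖v‖ ^ 2 - 2 * l * a + l ^ 2 := by
    rw [norm_sub_sq_real, inner_smul_right, norm_smul, hu, ← ha', mul_one, Real.norm_eq_abs, sq_abs]
    ring
  have h2 : ‖v‖ ^ 2 ≤ a ^ 2 + q ^ 2 := by
    have : ‖v - l • u‖ ^ 2 ≤ q ^ 2 := by
      apply pow_le_pow_left₀ (norm_nonneg _) hq
    nlinarith [sq_nonneg (l - a)]
  have h3 : 0 ≤ q ^ 2 / m := by positivity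
  apply abs_le_of_sq_le_sq' _ (by linarith) |>.2
  have h4 : q ^ 2 = m * (q ^ 2 / m) := by field_simp
  nlinarith

def cyl (σ ε : ℝ) : Set (EuclideanSpace ℝ (Fin 3)) :=
  {p | p 0 ∈ Ioo (-ε) ε ∧ p 1 ^ 2 + p 2 ^ 2 < σ ^ 2}

lemma cyl_isOpen (σ ε : ℝ) : IsOpen (cyl σ ε) := by
  have h0 : Continuous (fun p : E3 => p 0) := by fun_prop
  have h1 : Continuous (fun p : E3 => p 1 ^ 2 + p 2 ^ 2) := by fun_prop
  exact (isOpen_Ioo.preimage h0).inter (isOpen_lt h1 continuous_const)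

lemma cyl_meas (σ ε : ℝ) : MeasurableSet (cyl σ ε) := (cyl_isOpen σ ε).measurableSet

noncomputable def mclm (M : Matrix (Fin 3) (Fin 3) ℝ) : E3 →L[ℝ] E3 :=
  LinearMap.toContinuousLinearMap (Matrix.toEuclideanLin M)

lemma mclm_apply (M : Matrix (Fin 3) (Fin 3) ℝ) (h : E3) (i : Fin 3) :
    mclm M h i = M i 0 * h 0 + M i 1 * h 1 + M i 2 * h 2 := by
  simp [mclm, Matrix.mulVec, dotProduct, Fin.sum_univ_three]

lemma mclm_det (M : Matrix (Fin 3) (Fin 3) ℝ) : (mclm M).det = M.det := by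
  unfold mclm
  rw [ContinuousLinearMap.det, LinearMap.coe_toContinuousLinearMap,
    Matrix.toEuclideanLin, Matrix.toLpLin_eq_toLin, LinearMap.det_toLin]

/-- the flattening map -/
noncomputable def flat (k1 k2 : ℝ → ℝ) (σ : ℝ) (p : E3) : E3 :=
  !₂[p 0, p 1 + k1 (p 0) * ((σ ^ 2 - p 1 ^ 2 - p 2 ^ 2) / 2),
    p 2 + k2 (p 0) * ((σ ^ 2 - p 1 ^ 2 - p 2 ^ 2) / 2)]

lemma flat_hasFDerivAt (k1 k2 : ℝ → ℝ) (σ : ℝ) (p : E3) (d1 d2 : ℝ)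
    (h1 : HasDerivAt k1 d1 (p 0)) (h2 : HasDerivAt k2 d2 (p 0)) :
    HasFDerivAt (flat k1 k2 σ) (mclm !![1, 0, 0;
      d1 * ((σ ^ 2 - p 1 ^ 2 - p 2 ^ 2) / 2), 1 - k1 (p 0) * p 1, - k1 (p 0) * p 2;
      d2 * ((σ ^ 2 - p 1 ^ 2 - p 2 ^ 2) / 2), - k2 (p 0) * p 1, 1 - k2 (p 0) * p 2]) p := by
  have a0 : HasFDerivAt (fun f : E3 => f 0) _ p := PiLp.hasFDerivAt_apply (𝕜 := ℝ) 2 p 0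
  have a1 : HasFDerivAt (fun f : E3 => f 1) _ p := PiLp.hasFDerivAt_apply (𝕜 := ℝ) 2 p 1
  have a2 : HasFDerivAt (fun f : E3 => f 2) _ p := PiLp.hasFDerivAt_apply (𝕜 := ℝ) 2 p 2
  rw [← hasFDerivWithinAt_univ, hasFDerivWithinAt_euclidean]
  have hc := (((a1.pow 2).const_sub (σ ^ 2)).sub (a2.pow 2)).mul_const (2⁻¹ : ℝ)
  have b1 := a1.add ((h1.comp_hasFDerivAt p a0).mul hc)
  have b2 := a2.add ((h2.comp_hasFDerivAt p a0).mul hc)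
  intro i
  rw [hasFDerivWithinAt_univ]
  fin_cases i
  · refine HasFDerivAt.congr_fderiv (f := fun x => flat k1 k2 σ x 0) a0 ?_
    ext h
    simp [mclm_apply]
  · refine HasFDerivAt.congr_fderiv (f := fun x => flat k1 k2 σ x 1) b1 ?_
    ext h
    simp [mclm_apply]
    ring
  · refine HasFDerivAt.congr_fderiv (f := fun x => flat k1 k2 σ x 2) b2 ?_
    ext h
    simp [mclm_apply]
    ring

/-- inverse of flattening -/
noncomputable def unc (k1 k2 : ℝ → ℝ) (σ : ℝ) (q : E3) : ℝ :=
  (σ ^ 2 - q 1 ^ 2 - q 2 ^ 2) / ((1 - k1 (q 0) * q 1 - k2 (q 0) * q 2) +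
    √((1 - k1 (q 0) * q 1 - k2 (q 0) * q 2) ^ 2 +
      (k1 (q 0) ^ 2 + k2 (q 0) ^ 2) * (σ ^ 2 - q 1 ^ 2 - q 2 ^ 2)))

noncomputable def unflat (k1 k2 : ℝ → ℝ) (σ : ℝ) (q : E3) : E3 :=
  !₂[q 0, q 1 - unc k1 k2 σ q * k1 (q 0), q 2 - unc k1 k2 σ q * k2 (q 0)]

lemma unflat_meas (k1 k2 : ℝ → ℝ) (σ : ℝ) (h1 : Measurable k1) (h2 : Measurable k2) :
    Measurable (unflat k1 k2 σ) := by
  have m : ∀ i : Fin 3, Measurable (fun q : E3 => q i) := fun i => by fun_prop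
  have c1 : Measurable (fun q : E3 => k1 (q 0)) := h1.comp (m 0)
  have c2 : Measurable (fun q : E3 => k2 (q 0)) := h2.comp (m 0)
  have m0 := m 0
  have m1 := m 1
  have m2 := m 2
  have mc : Measurable (unc k1 k2 σ) := by
    unfold unc
    fun_prop
  refine (WithLp.measurable_toLp 2 _).comp ?_
  rw [measurable_pi_iff]
  intro i
  fin_cases i
  · exact m0
  · exact m1.sub (mc.mul c1)
  · exact m2.sub (mc.mul c2)

/-- key algebra: with `x` in the disk and `y = flat x`, `unc y = (σ²-|x|²)/2`. -/
lemma unc_flat (k1 k2 : ℝ → ℝ) (σ ε : ℝ) (p : E3) (hp : p ∈ cyl σ ε)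
    (hk : (k1 (p 0) ^ 2 + k2 (p 0) ^ 2) * σ ^ 2 < 1) :
    unc k1 k2 σ (flat k1 k2 σ p) = (σ ^ 2 - p 1 ^ 2 - p 2 ^ 2) / 2 := by
  have hx := hp.2
  have f0 : flat k1 k2 σ p 0 = p 0 := rfl
  have f1 : flat k1 k2 σ p 1 = p 1 + k1 (p 0) * ((σ ^ 2 - p 1 ^ 2 - p 2 ^ 2) / 2) := rfl
  have f2 : flat k1 k2 σ p 2 = p 2 + k2 (p 0) * ((σ ^ 2 - p 1 ^ 2 - p 2 ^ 2) / 2) := rfl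
  unfold unc
  rw [f0, f1, f2]
  generalize k1 (p 0) = a at *
  generalize k2 (p 0) = b at *
  generalize p 1 = x at *
  generalize p 2 = y at *
  have hd : (a * x + b * y) ^ 2 ≤ (a ^ 2 + b ^ 2) * (x ^ 2 + y ^ 2) := by
    nlinarith [sq_nonneg (a * y - b * x)]
  have hd2 : (a ^ 2 + b ^ 2) * (x ^ 2 + y ^ 2) ≤ (a ^ 2 + b ^ 2) * σ ^ 2 :=
    mul_le_mul_of_nonneg_left hx.le (by positivity)
  have hkx' : a * x + b * y < 1 := by nlinarith
  set c := (σ ^ 2 - x ^ 2 - y ^ 2) / 2 with hcdef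
  have hsq : σ ^ 2 = 2 * c + x ^ 2 + y ^ 2 := by rw [hcdef]; ring
  have e : (1 - a * (x + a * c) - b * (y + b * c)) ^ 2 +
      (a ^ 2 + b ^ 2) * (σ ^ 2 - (x + a * c) ^ 2 - (y + b * c) ^ 2)
      = (1 - a * x - b * y) ^ 2 := by
    rw [hsq]; ring
  rw [e, Real.sqrt_sq (by linarith)]
  have hcc : (a ^ 2 + b ^ 2) * c ≤ 1 - (a * x + b * y) := by
    rw [hcdef]
    nlinarith [sq_nonneg (1 - (a * x + b * y))]
  rw [div_eq_iff (by nlinarith)]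
  rw [hsq]; ring

lemma flat_mem (k1 k2 : ℝ → ℝ) (σ ε : ℝ) (p : E3) (hp : p ∈ cyl σ ε)
    (hk : (k1 (p 0) ^ 2 + k2 (p 0) ^ 2) * σ ^ 2 < 1) : flat k1 k2 σ p ∈ cyl σ ε := by
  refine ⟨hp.1, ?_⟩
  have hx := hp.2
  have f1 : flat k1 k2 σ p 1 = p 1 + k1 (p 0) * ((σ ^ 2 - p 1 ^ 2 - p 2 ^ 2) / 2) := rfl
  have f2 : flat k1 k2 σ p 2 = p 2 + k2 (p 0) * ((σ ^ 2 - p 1 ^ 2 - p 2 ^ 2) / 2) := rfl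
  rw [f1, f2]
  generalize k1 (p 0) = a at *
  generalize k2 (p 0) = b at *
  generalize p 1 = x at *
  generalize p 2 = y at *
  have hd : (a * x + b * y) ^ 2 ≤ (a ^ 2 + b ^ 2) * (x ^ 2 + y ^ 2) := by
    nlinarith [sq_nonneg (a * y - b * x)]
  have hd2 : (a ^ 2 + b ^ 2) * (x ^ 2 + y ^ 2) ≤ (a ^ 2 + b ^ 2) * σ ^ 2 :=
    mul_le_mul_of_nonneg_left hx.le (by positivity)
  have hkx' : a * x + b * y < 1 := by nlinarith
  set c := (σ ^ 2 - x ^ 2 - y ^ 2) / 2 with hcdef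
  have hsq : σ ^ 2 = 2 * c + x ^ 2 + y ^ 2 := by rw [hcdef]; ring
  have hcpos : 0 < c := by rw [hcdef]; linarith
  have hcc : (a ^ 2 + b ^ 2) * c ≤ 1 - (a * x + b * y) := by
    rw [hcdef]
    nlinarith [sq_nonneg (1 - (a * x + b * y))]
  rw [hsq]
  have : (a ^ 2 + b ^ 2) * c < 2 * (1 - (a * x + b * y)) := by linarith
  nlinarith [mul_lt_mul_of_pos_right this hcpos]

lemma unflat_flat (k1 k2 : ℝ → ℝ) (σ ε : ℝ) (p : E3) (hp : p ∈ cyl σ ε)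
    (hk : (k1 (p 0) ^ 2 + k2 (p 0) ^ 2) * σ ^ 2 < 1) :
    unflat k1 k2 σ (flat k1 k2 σ p) = p := by
  have h := unc_flat k1 k2 σ ε p hp hk
  ext i
  have f0 : flat k1 k2 σ p 0 = p 0 := rfl
  have f1 : flat k1 k2 σ p 1 = p 1 + k1 (p 0) * ((σ ^ 2 - p 1 ^ 2 - p 2 ^ 2) / 2) := rfl
  have f2 : flat k1 k2 σ p 2 = p 2 + k2 (p 0) * ((σ ^ 2 - p 1 ^ 2 - p 2 ^ 2) / 2) := rfl
  fin_cases i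
  · rfl
  · change flat k1 k2 σ p 1 - unc k1 k2 σ (flat k1 k2 σ p) * k1 (flat k1 k2 σ p 0) = p 1
    rw [h, f0, f1]; ring
  · change flat k1 k2 σ p 2 - unc k1 k2 σ (flat k1 k2 σ p) * k2 (flat k1 k2 σ p 0) = p 2
    rw [h, f0, f2]; ring

/-- properties of the inverse on the cylinder -/
lemma unflat_mem (k1 k2 : ℝ → ℝ) (σ ε : ℝ) (q : E3) (hq : q ∈ cyl σ ε)
    (hk : (k1 (q 0) ^ 2 + k2 (q 0) ^ 2) * σ ^ 2 < 1) :
    unflat k1 k2 σ q ∈ cyl σ ε ∧ flat k1 k2 σ (unflat k1 k2 σ q) = q ∧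
      unc k1 k2 σ q = (σ ^ 2 - (unflat k1 k2 σ q) 1 ^ 2 - (unflat k1 k2 σ q) 2 ^ 2) / 2 := by
  have hx := hq.2
  have u0 : unflat k1 k2 σ q 0 = q 0 := rfl
  have u1 : unflat k1 k2 σ q 1 = q 1 - unc k1 k2 σ q * k1 (q 0) := rfl
  have u2 : unflat k1 k2 σ q 2 = q 2 - unc k1 k2 σ q * k2 (q 0) := rfl
  have key : unc k1 k2 σ q = (σ ^ 2 - (unflat k1 k2 σ q) 1 ^ 2 - (unflat k1 k2 σ q) 2 ^ 2) / 2 ∧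
      0 < unc k1 k2 σ q := by
    rw [u1, u2]
    unfold unc
    generalize k1 (q 0) = a at *
    generalize k2 (q 0) = b at *
    generalize q 1 = x at *
    generalize q 2 = y at *
    have hd : (a * x + b * y) ^ 2 ≤ (a ^ 2 + b ^ 2) * (x ^ 2 + y ^ 2) := by
      nlinarith [sq_nonneg (a * y - b * x)]
    have hd2 : (a ^ 2 + b ^ 2) * (x ^ 2 + y ^ 2) ≤ (a ^ 2 + b ^ 2) * σ ^ 2 :=
      mul_le_mul_of_nonneg_left hx.le (by positivity)
    have hkx' : a * x + b * y < 1 := by nlinarith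
    have hm : 0 < 1 - a * x - b * y := by linarith
    have hr : 0 < σ ^ 2 - x ^ 2 - y ^ 2 := by linarith
    have hk0 : 0 ≤ a ^ 2 + b ^ 2 := by positivity
    set S := √((1 - a * x - b * y) ^ 2 + (a ^ 2 + b ^ 2) * (σ ^ 2 - x ^ 2 - y ^ 2)) with hS
    have hS2 : S ^ 2 = (1 - a * x - b * y) ^ 2 + (a ^ 2 + b ^ 2) * (σ ^ 2 - x ^ 2 - y ^ 2) :=
      Real.sq_sqrt (by positivity)
    have hS0 : 0 ≤ S := Real.sqrt_nonneg _
    set c := (σ ^ 2 - x ^ 2 - y ^ 2) / (1 - a * x - b * y + S) with hc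
    have hcm : c * (1 - a * x - b * y + S) = σ ^ 2 - x ^ 2 - y ^ 2 := by
      rw [hc]; exact div_mul_cancel₀ _ (by positivity)
    have hcp : 0 < c := by positivity
    clear_value c
    refine ⟨?_, hcp⟩
    have h1 : (a ^ 2 + b ^ 2) * c = S - (1 - a * x - b * y) := by
      have : (S + (1 - a * x - b * y)) * ((a ^ 2 + b ^ 2) * c) =
        (S + (1 - a * x - b * y)) * (S - (1 - a * x - b * y)) := by
        linear_combination (a ^ 2 + b ^ 2) * hcm - hS2
      exact mul_left_cancel₀ (by positivity) this
    linear_combination (1/2) * hcm + (c / 2) * h1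
  refine ⟨⟨hq.1, ?_⟩, ?_, key.1⟩
  · linarith [key.1, key.2]
  · ext i
    fin_cases i
    · rfl
    · change unflat k1 k2 σ q 1 + k1 (unflat k1 k2 σ q 0) *
        ((σ ^ 2 - unflat k1 k2 σ q 1 ^ 2 - unflat k1 k2 σ q 2 ^ 2) / 2) = q 1
      rw [← key.1, u0, u1]; ring
    · change unflat k1 k2 σ q 2 + k2 (unflat k1 k2 σ q 0) *
        ((σ ^ 2 - unflat k1 k2 σ q 1 ^ 2 - unflat k1 k2 σ q 2 ^ 2) / 2) = q 2
      rw [← key.1, u0, u2]; ring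

noncomputable def dens (k1 k2 : ℝ → ℝ) (p : EuclideanSpace ℝ (Fin 3)) : ENNReal :=
  ENNReal.ofReal |1 - k1 (p 0) * p 1 - k2 (p 0) * p 2|

noncomputable def mm (k1 k2 : ℝ → ℝ) (σ ε : ℝ) : Measure (EuclideanSpace ℝ (Fin 3)) :=
  (volume.restrict (cyl σ ε)).withDensity (dens k1 k2)

lemma dens_meas (k1 k2 : ℝ → ℝ) (h1 : Measurable k1) (h2 : Measurable k2) :
    Measurable (dens k1 k2) := by
  have m : ∀ i : Fin 3, Measurable (fun q : E3 => q i) := fun i => by fun_prop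
  have c1 : Measurable (fun q : E3 => k1 (q 0)) := h1.comp (m 0)
  have c2 : Measurable (fun q : E3 => k2 (q 0)) := h2.comp (m 0)
  have m1 := m 1
  have m2 := m 2
  have : Measurable (fun p : E3 => 1 - k1 (p 0) * p 1 - k2 (p 0) * p 2) := by fun_prop
  exact ENNReal.measurable_ofReal.comp (measurable_norm.comp this)

lemma flat_meas (k1 k2 : ℝ → ℝ) (σ : ℝ) (h1 : Measurable k1) (h2 : Measurable k2) :
    Measurable (flat k1 k2 σ) := by
  have m : ∀ i : Fin 3, Measurable (fun q : E3 => q i) := fun i => by fun_prop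
  have c1 : Measurable (fun q : E3 => k1 (q 0)) := h1.comp (m 0)
  have c2 : Measurable (fun q : E3 => k2 (q 0)) := h2.comp (m 0)
  have m0 := m 0
  have m1 := m 1
  have m2 := m 2
  refine (WithLp.measurable_toLp 2 _).comp ?_
  rw [measurable_pi_iff]
  intro i
  fin_cases i
  · exact m0
  · change Measurable (fun p : E3 => p 1 + k1 (p 0) * ((σ ^ 2 - p 1 ^ 2 - p 2 ^ 2) / 2))
    fun_prop
  · change Measurable (fun p : E3 => p 2 + k2 (p 0) * ((σ ^ 2 - p 1 ^ 2 - p 2 ^ 2) / 2))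
    fun_prop

lemma flat_map (k1 k2 : ℝ → ℝ) (σ ε : ℝ)
    (d1 : ∀ s ∈ Ioo (-ε) ε, DifferentiableAt ℝ k1 s)
    (d2 : ∀ s ∈ Ioo (-ε) ε, DifferentiableAt ℝ k2 s)
    (hk : ∀ s ∈ Ioo (-ε) ε, (k1 s ^ 2 + k2 s ^ 2) * σ ^ 2 < 1) :
    (mm k1 k2 σ ε).map (flat k1 k2 σ) = volume.restrict (cyl σ ε) := by
  have him : flat k1 k2 σ '' cyl σ ε = cyl σ ε := by
    apply Subset.antisymm
    · rintro _ ⟨p, hp, rfl⟩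
      exact flat_mem k1 k2 σ ε p hp (hk _ hp.1)
    · intro q hq
      have := unflat_mem k1 k2 σ ε q hq (hk _ hq.1)
      exact ⟨_, this.1, this.2.1⟩
  have hinj : InjOn (flat k1 k2 σ) (cyl σ ε) := by
    intro p hp q hq h
    rw [← unflat_flat k1 k2 σ ε p hp (hk _ hp.1), h, unflat_flat k1 k2 σ ε q hq (hk _ hq.1)]
  have key := map_withDensity_abs_det_fderiv_eq_addHaar (μ := (volume : Measure E3))
    (cyl_meas σ ε).nullMeasurableSet (fun p hp => (flat_hasFDerivAt k1 k2 σ p _ _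
      (d1 _ hp.1).hasDerivAt (d2 _ hp.1).hasDerivAt).hasFDerivWithinAt) hinj
  rw [him] at key
  rw [← key, mm]
  congr 2
  ext p
  rw [dens, mclm_det]
  congr 2
  simp [Matrix.det_fin_three]
  ring

lemma mm_eq (k1 k2 : ℝ → ℝ) (σ ε : ℝ) (h1 : Measurable k1) (h2 : Measurable k2)
    (d1 : ∀ s ∈ Ioo (-ε) ε, DifferentiableAt ℝ k1 s)
    (d2 : ∀ s ∈ Ioo (-ε) ε, DifferentiableAt ℝ k2 s)
    (hk : ∀ s ∈ Ioo (-ε) ε, (k1 s ^ 2 + k2 s ^ 2) * σ ^ 2 < 1) :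
    mm k1 k2 σ ε = (volume.restrict (cyl σ ε)).map (unflat k1 k2 σ) := by
  rw [← flat_map k1 k2 σ ε d1 d2 hk, Measure.map_map (unflat_meas k1 k2 σ h1 h2)
    (flat_meas k1 k2 σ h1 h2)]
  have : (unflat k1 k2 σ ∘ flat k1 k2 σ) =ᵐ[mm k1 k2 σ ε] id := by
    have hac : mm k1 k2 σ ε ≪ volume.restrict (cyl σ ε) := withDensity_absolutelyContinuous _ _
    apply hac.ae_le
    filter_upwards [ae_restrict_mem (cyl_meas σ ε)] with p hp
    exact unflat_flat k1 k2 σ ε p hp (hk _ hp.1)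
  rw [Measure.map_congr this, Measure.map_id]

noncomputable def psi (g e1 e2 : ℝ → EuclideanSpace ℝ (Fin 3)) (p : EuclideanSpace ℝ (Fin 3)) :
    EuclideanSpace ℝ (Fin 3) := g (p 0) + p 1 • e1 (p 0) + p 2 • e2 (p 0)

lemma psi_meas (g e1 e2 : ℝ → E3) (hg : Measurable g) (h1 : Measurable e1) (h2 : Measurable e2) :
    Measurable (psi g e1 e2) := by
  have m : ∀ i : Fin 3, Measurable (fun q : E3 => q i) := fun i => by fun_prop
  exact ((hg.comp (m 0)).add ((m 1).smul (h1.comp (m 0)))).add ((m 2).smul (h2.comp (m 0)))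

lemma psi_hasFDerivAt (g e1 e2 : ℝ → E3) (T f1 f2 : E3) (p : E3)
    (hg : HasDerivAt g T (p 0)) (h1 : HasDerivAt e1 f1 (p 0)) (h2 : HasDerivAt e2 f2 (p 0)) :
    HasFDerivAt (psi g e1 e2) (mclm (Matrix.of fun i j =>
      ![(T + p 1 • f1 + p 2 • f2) i, e1 (p 0) i, e2 (p 0) i] j)) p := by
  have a0 : HasFDerivAt (fun f : E3 => f 0) _ p := PiLp.hasFDerivAt_apply (𝕜 := ℝ) 2 p 0
  have a1 : HasFDerivAt (fun f : E3 => f 1) _ p := PiLp.hasFDerivAt_apply (𝕜 := ℝ) 2 p 1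
  have a2 : HasFDerivAt (fun f : E3 => f 2) _ p := PiLp.hasFDerivAt_apply (𝕜 := ℝ) 2 p 2
  have b := ((hg.hasFDerivAt.comp p a0).add (a1.smul (h1.hasFDerivAt.comp p a0))).add
    (a2.smul (h2.hasFDerivAt.comp p a0))
  refine HasFDerivAt.congr_fderiv (f := psi g e1 e2) b ?_
  ext h i
  rw [mclm_apply]
  simp
  ring

lemma inner3 (u v : E3) : inner ℝ u v = u 0 * v 0 + u 1 * v 1 + u 2 * v 2 := by
  simp [PiLp.inner_apply, Fin.sum_univ_three, mul_comm]

/-- expansion in an orthonormal frame -/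
lemma frame_expand (T f1 f2 : E3) (hT : inner ℝ T T = (1:ℝ)) (h1 : inner ℝ f1 f1 = (1:ℝ))
    (h2 : inner ℝ f2 f2 = (1:ℝ)) (hT1 : inner ℝ f1 T = (0:ℝ)) (hT2 : inner ℝ f2 T = (0:ℝ))
    (h12 : inner ℝ f1 f2 = (0:ℝ)) (v : E3) :
    v = (inner ℝ v T : ℝ) • T + (inner ℝ v f1 : ℝ) • f1 + (inner ℝ v f2 : ℝ) • f2 := by
  have hn : ∀ w : E3, inner ℝ w w = (1:ℝ) → ‖w‖ = 1 := by
    intro w hw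
    rw [real_inner_self_eq_norm_sq] at hw
    nlinarith [norm_nonneg w]
  have ho : Orthonormal ℝ ![T, f1, f2] := by
    constructor
    · intro i; fin_cases i
      · exact hn _ hT
      · exact hn _ h1
      · exact hn _ h2
    · intro i j hij
      have hT1' : inner ℝ T f1 = (0:ℝ) := by rw [real_inner_comm]; exact hT1
      have hT2' : inner ℝ T f2 = (0:ℝ) := by rw [real_inner_comm]; exact hT2
      have h12' : inner ℝ f2 f1 = (0:ℝ) := by rw [real_inner_comm]; exact h12
      fin_cases i <;> fin_cases j <;> first | exact absurd rfl hij | assumption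
  have hb : Module.finrank ℝ E3 = Fintype.card (Fin 3) := by simp
  let B0 := basisOfOrthonormalOfCardEqFinrank ho hb.symm
  have hB0 : ⇑B0 = ![T, f1, f2] := coe_basisOfOrthonormalOfCardEqFinrank ho hb.symm
  let B := B0.toOrthonormalBasis (by rw [hB0]; exact ho)
  have hB : ⇑B = ![T, f1, f2] := by simp [B, hB0]
  have := (B.sum_repr' v).symm
  rw [Fin.sum_univ_three, hB] at this
  simp only [Matrix.cons_val_zero, Matrix.cons_val_one, Matrix.cons_val] at this
  rw [real_inner_comm v T, real_inner_comm v f1, real_inner_comm v f2] at this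
  exact this

lemma frame_parseval (T f1 f2 : E3) (hT : inner ℝ T T = (1:ℝ)) (h1 : inner ℝ f1 f1 = (1:ℝ))
    (h2 : inner ℝ f2 f2 = (1:ℝ)) (hT1 : inner ℝ f1 T = (0:ℝ)) (hT2 : inner ℝ f2 T = (0:ℝ))
    (h12 : inner ℝ f1 f2 = (0:ℝ)) (v w : E3) :
    inner ℝ v w = inner ℝ v T * inner ℝ w T + inner ℝ v f1 * inner ℝ w f1
      + (inner ℝ v f2 * inner ℝ w f2 : ℝ) := by
  conv_lhs => rw [frame_expand T f1 f2 hT h1 h2 hT1 hT2 h12 v]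
  rw [inner_add_left, inner_add_left, inner_smul_left, inner_smul_left, inner_smul_left,
    real_inner_comm w T, real_inner_comm w f1, real_inner_comm w f2]
  simp

lemma psi_det (T f1 f2 c : E3) (hT : inner ℝ T T = (1:ℝ)) (h1 : inner ℝ f1 f1 = (1:ℝ))
    (h2 : inner ℝ f2 f2 = (1:ℝ)) (hT1 : inner ℝ f1 T = (0:ℝ)) (hT2 : inner ℝ f2 T = (0:ℝ))
    (h12 : inner ℝ f1 f2 = (0:ℝ)) :
    |(Matrix.of fun i j => ![c i, f1 i, f2 i] j : Matrix (Fin 3) (Fin 3) ℝ).det|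
      = |(inner ℝ c T : ℝ)| := by
  rw [← sq_eq_sq_iff_abs_eq_abs]
  have hp := frame_parseval T f1 f2 hT h1 h2 hT1 hT2 h12 c c
  have e : (inner ℝ c T : ℝ) ^ 2 = inner ℝ c c - (inner ℝ c f1 : ℝ) ^ 2 - (inner ℝ c f2 : ℝ) ^ 2 := by
    rw [hp]; ring
  have e2 : (inner ℝ c T : ℝ) ^ 2 = inner ℝ c c * (inner ℝ f1 f1 * inner ℝ f2 f2
      - inner ℝ f1 f2 * inner ℝ f1 f2) - inner ℝ c f1 * (inner ℝ c f1 * inner ℝ f2 f2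
      - inner ℝ f1 f2 * inner ℝ c f2) + inner ℝ c f2 * (inner ℝ c f1 * inner ℝ f1 f2
      - inner ℝ f1 f1 * inner ℝ c f2) := by
    rw [e, h1, h2, h12]; ring
  rw [e2]
  simp only [inner3]
  rw [Matrix.det_fin_three]
  simp
  ring

/-- The tube is the image of the uniform measure on the cylinder. -/
lemma tube_param (g T e1 e2 f1 f2 : ℝ → E3) (k1 k2 : ℝ → ℝ) (σ ε : ℝ)
    (mg : Measurable g) (me1 : Measurable e1) (me2 : Measurable e2)
    (h1 : Measurable k1) (h2 : Measurable k2)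
    (d1 : ∀ s ∈ Ioo (-ε) ε, DifferentiableAt ℝ k1 s)
    (d2 : ∀ s ∈ Ioo (-ε) ε, DifferentiableAt ℝ k2 s)
    (hk : ∀ s ∈ Ioo (-ε) ε, (k1 s ^ 2 + k2 s ^ 2) * σ ^ 2 < 1)
    (hg : ∀ s ∈ Ioo (-ε) ε, HasDerivAt g (T s) s)
    (he1 : ∀ s ∈ Ioo (-ε) ε, HasDerivAt e1 (f1 s) s)
    (he2 : ∀ s ∈ Ioo (-ε) ε, HasDerivAt e2 (f2 s) s)
    (oT : ∀ s ∈ Ioo (-ε) ε, inner ℝ (T s) (T s) = (1:ℝ))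
    (o1 : ∀ s ∈ Ioo (-ε) ε, inner ℝ (e1 s) (e1 s) = (1:ℝ))
    (o2 : ∀ s ∈ Ioo (-ε) ε, inner ℝ (e2 s) (e2 s) = (1:ℝ))
    (oT1 : ∀ s ∈ Ioo (-ε) ε, inner ℝ (e1 s) (T s) = (0:ℝ))
    (oT2 : ∀ s ∈ Ioo (-ε) ε, inner ℝ (e2 s) (T s) = (0:ℝ))
    (o12 : ∀ s ∈ Ioo (-ε) ε, inner ℝ (e1 s) (e2 s) = (0:ℝ))
    (c1 : ∀ s ∈ Ioo (-ε) ε, inner ℝ (f1 s) (T s) = - k1 s)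
    (c2 : ∀ s ∈ Ioo (-ε) ε, inner ℝ (f2 s) (T s) = - k2 s)
    (hinj : InjOn (psi g e1 e2) (cyl σ ε)) :
    normRestrict (psi g e1 e2 '' cyl σ ε) =
        (normRestrict (cyl σ ε)).map (psi g e1 e2 ∘ unflat k1 k2 σ) ∧
    normRestrict (psi g e1 e2 '' cyl σ ε) =
        ((volume (cyl σ ε))⁻¹ • mm k1 k2 σ ε).map (psi g e1 e2) := by
  have mpsi := psi_meas g e1 e2 mg me1 me2
  have mun := unflat_meas k1 k2 σ h1 h2
  have key := map_withDensity_abs_det_fderiv_eq_addHaar (μ := (volume : Measure E3))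
    (cyl_meas σ ε).nullMeasurableSet (fun p hp => (psi_hasFDerivAt g e1 e2 _ _ _ p
      (hg _ hp.1) (he1 _ hp.1) (he2 _ hp.1)).hasFDerivWithinAt) hinj
  have hmm : (volume.restrict (cyl σ ε)).withDensity (fun p : E3 => ENNReal.ofReal
      |(mclm (Matrix.of fun i j => ![(T (p 0) + p 1 • f1 (p 0) + p 2 • f2 (p 0)) i,
        e1 (p 0) i, e2 (p 0) i] j)).det|) = mm k1 k2 σ ε := by
    apply withDensity_congr_ae
    filter_upwards [ae_restrict_mem (cyl_meas σ ε)] with p hp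
    have hs := hp.1
    rw [mclm_det, psi_det (T (p 0)) _ _ _ (oT _ hs) (o1 _ hs) (o2 _ hs) (oT1 _ hs) (oT2 _ hs)
      (o12 _ hs), dens, inner_add_left, inner_add_left, inner_smul_left, inner_smul_left,
      oT _ hs, c1 _ hs, c2 _ hs]
    congr 2
    simp
    ring
  rw [hmm] at key
  have hmap : volume.restrict (psi g e1 e2 '' cyl σ ε) =
      (volume.restrict (cyl σ ε)).map (psi g e1 e2 ∘ unflat k1 k2 σ) := by
    rw [← key, mm_eq k1 k2 σ ε h1 h2 d1 d2 hk, Measure.map_map mpsi mun]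
  have hvol : volume (psi g e1 e2 '' cyl σ ε) = volume (cyl σ ε) := by
    have := congrArg (fun m => m univ) hmap
    simp only [Measure.restrict_apply_univ] at this
    rw [this, Measure.map_apply (mpsi.comp mun) MeasurableSet.univ, preimage_univ,
      Measure.restrict_apply_univ]
  constructor
  · rw [normRestrict, normRestrict, hvol, hmap, Measure.map_smul]
  · rw [normRestrict, hvol, ← key, Measure.map_smul]

noncomputable def flipE (i : Fin 3) : EuclideanSpace ℝ (Fin 3) ≃ₗᵢ[ℝ] EuclideanSpace ℝ (Fin 3) :=
  LinearIsometryEquiv.piLpCongrRight 2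
    (fun j => if j = i then LinearIsometryEquiv.neg ℝ else LinearIsometryEquiv.refl ℝ ℝ)

lemma flipE_apply (i j : Fin 3) (p : E3) : flipE i p j = if j = i then - p j else p j := by
  unfold flipE
  simp
  split_ifs <;> simp

noncomputable def swapE : EuclideanSpace ℝ (Fin 3) ≃ₗᵢ[ℝ] EuclideanSpace ℝ (Fin 3) :=
  LinearIsometryEquiv.piLpCongrLeft 2 ℝ ℝ (Equiv.swap 1 2)

lemma swapE_0 (p : E3) : swapE p 0 = p 0 := by
  simp [swapE, LinearIsometryEquiv.piLpCongrLeft_apply, Equiv.piCongrLeft'_apply, Equiv.swap_apply_of_ne_of_ne]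
lemma swapE_1 (p : E3) : swapE p 1 = p 2 := by
  simp [swapE, LinearIsometryEquiv.piLpCongrLeft_apply, Equiv.piCongrLeft'_apply]
lemma swapE_2 (p : E3) : swapE p 2 = p 1 := by
  simp [swapE, LinearIsometryEquiv.piLpCongrLeft_apply, Equiv.piCongrLeft'_apply]

lemma nu_pres (σ ε : ℝ) (S : E3 ≃ₗᵢ[ℝ] E3) (hS : S ⁻¹' cyl σ ε = cyl σ ε) :
    MeasurePreserving S (normRestrict (cyl σ ε)) (normRestrict (cyl σ ε)) := by
  have h := (LinearIsometryEquiv.measurePreserving S).restrict_preimage (cyl_meas σ ε)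
  rw [hS] at h
  refine ⟨h.measurable, ?_⟩
  unfold normRestrict
  rw [Measure.map_smul, h.map_eq]

lemma nu_flip (σ ε : ℝ) (i : Fin 3) :
    MeasurePreserving (flipE i) (normRestrict (cyl σ ε)) (normRestrict (cyl σ ε)) := by
  apply nu_pres
  ext p
  fin_cases i <;> simp [cyl, flipE_apply, neg_lt, and_comm]

lemma nu_swap (σ ε : ℝ) :
    MeasurePreserving swapE (normRestrict (cyl σ ε)) (normRestrict (cyl σ ε)) := by
  apply nu_pres
  ext p
  simp [cyl, swapE_0, swapE_1, swapE_2, add_comm]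

lemma cyl_norm (σ ε : ℝ) (p : E3) (hp : p ∈ cyl σ ε) : ‖p‖ ^ 2 < ε ^ 2 + σ ^ 2 := by
  rw [← real_inner_self_eq_norm_sq, inner3]
  obtain ⟨⟨a, b⟩, c⟩ := hp
  nlinarith

lemma cyl_vol_lt (σ ε : ℝ) : volume (cyl σ ε) < ⊤ := by
  refine lt_of_le_of_lt (measure_mono (t := Metric.closedBall 0 (Real.sqrt (ε^2+σ^2))) ?_) measure_closedBall_lt_top
  intro p hp
  rw [mem_closedBall_zero_iff]
  exact Real.le_sqrt_of_sq_le (cyl_norm σ ε p hp).le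

lemma cyl_vol_pos (σ ε : ℝ) (hσ : 0 < σ) (hε : 0 < ε) : 0 < volume (cyl σ ε) := by
  refine (cyl_isOpen σ ε).measure_pos volume ⟨0, ?_⟩
  simp [cyl, hσ, hε]

lemma nu_prob (σ ε : ℝ) (hσ : 0 < σ) (hε : 0 < ε) : IsProbabilityMeasure (normRestrict (cyl σ ε)) := by
  constructor
  unfold normRestrict
  simp
  exact ENNReal.inv_mul_cancel (cyl_vol_pos σ ε hσ hε).ne' (cyl_vol_lt σ ε).ne

lemma nu_ae (σ ε : ℝ) : ∀ᵐ p ∂(normRestrict (cyl σ ε)), p ∈ cyl σ ε := by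
  unfold normRestrict
  apply Measure.ae_smul_measure
  exact ae_restrict_mem (cyl_meas σ ε)

lemma nu_int (σ ε : ℝ) (f : E3 → ℝ) :
    ∫ p, f p ∂(normRestrict (cyl σ ε)) = (volume (cyl σ ε)).toReal⁻¹ * ∫ p in cyl σ ε, f p := by
  unfold normRestrict
  rw [integral_smul_measure, ENNReal.toReal_inv, smul_eq_mul]

lemma nu_integrable (σ ε : ℝ) (hσ : 0 < σ) (hε : 0 < ε) (f : E3 → ℝ) (hf : Measurable f) (K : ℝ)
    (hK : ∀ p ∈ cyl σ ε, |f p| ≤ K) : Integrable f (normRestrict (cyl σ ε)) := by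
  have := nu_prob σ ε hσ hε
  refine Integrable.of_bound hf.aestronglyMeasurable K ?_
  filter_upwards [nu_ae σ ε] with p hp using hK p hp

lemma sq_le_of_cyl (σ ε : ℝ) (p : E3) (hp : p ∈ cyl σ ε) : p 0 ^ 2 ≤ ε ^ 2 ∧ p 1 ^ 2 ≤ σ ^ 2 ∧ p 2 ^ 2 ≤ σ ^ 2 := by
  obtain ⟨⟨a, b⟩, c⟩ := hp
  refine ⟨by nlinarith, by nlinarith, by nlinarith⟩

lemma nu_s2 (σ ε : ℝ) (hσ : 0 < σ) (hε : 0 < ε) :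
    ∫ p, p 0 ^ 2 ∂(normRestrict (cyl σ ε)) = ε ^ 2 / 3 := by
  set D : Set (Fin 2 → ℝ) := {y | y 0 ^ 2 + y 1 ^ 2 < σ ^ 2} with hD
  have hDm : MeasurableSet D := by
    apply measurableSet_lt <;> fun_prop
  have h1 := (volume_preserving_piFinSuccAbove (fun _ : Fin 3 => ℝ) 0).comp
    (PiLp.volume_preserving_ofLp (Fin 3))
  set Φ := (MeasurableEquiv.toLp 2 (Fin 3 → ℝ)).symm.trans (MeasurableEquiv.piFinSuccAbove (fun _ : Fin 3 => ℝ) 0) with hΦ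
  have hpre : Φ ⁻¹' (Ioo (-ε) ε ×ˢ D) = cyl σ ε := by
    ext p
    simp [cyl, hD, hΦ, MeasurableEquiv.piFinSuccAbove, Fin.insertNthEquiv]
    intro _ _; rfl
  have hmp : MeasurePreserving Φ volume volume := h1
  have hvol : volume (cyl σ ε) = ENNReal.ofReal (2 * ε) * volume D := by
    rw [← hpre, hmp.measure_preimage_equiv, Measure.volume_eq_prod, Measure.prod_prod, Real.volume_Ioo]
    congr 2; ring
  have hint : ∫ p in cyl σ ε, p 0 ^ 2 = (∫ s in Ioo (-ε) ε, s ^ 2) * (∫ y in D, (1:ℝ)) := by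
    rw [← setIntegral_prod_mul (μ := volume) (ν := volume) (fun s => s^2) (fun _ => (1:ℝ)), ← hpre]
    rw [← Measure.volume_eq_prod, ← hmp.setIntegral_preimage_emb Φ.measurableEmbedding]
    congr 1
    ext p
    simp [hΦ, MeasurableEquiv.piFinSuccAbove, Fin.insertNthEquiv]
  have e1 : ∫ s in Ioo (-ε) ε, s ^ 2 = 2 * ε ^ 3 / 3 := by
    rw [← integral_Ioc_eq_integral_Ioo, ← intervalIntegral.integral_of_le (by linarith)]
    simp; ring
  have hpos := cyl_vol_pos σ ε hσ hε
  have hlt := cyl_vol_lt σ ε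
  have hr : (volume (cyl σ ε)).toReal = 2 * ε * (volume D).toReal := by
    rw [hvol, ENNReal.toReal_mul, ENNReal.toReal_ofReal (by linarith)]
  have hp2 := ENNReal.toReal_pos hpos.ne' hlt.ne
  rw [nu_int, hint, e1, hr]
  simp [Measure.real]
  have : (volume D).toReal ≠ 0 := by
    intro h; rw [hr, h] at hp2; simp at hp2
  field_simp

lemma nu_comp (σ ε : ℝ) (S : E3 ≃ₗᵢ[ℝ] E3)
    (h : MeasurePreserving S (normRestrict (cyl σ ε)) (normRestrict (cyl σ ε))) (f : E3 → ℝ) :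
    ∫ p, f (S p) ∂(normRestrict (cyl σ ε)) = ∫ p, f p ∂(normRestrict (cyl σ ε)) :=
  h.integral_comp S.toHomeomorph.measurableEmbedding f

lemma nu_avg (σ ε : ℝ) (S : E3 ≃ₗᵢ[ℝ] E3)
    (h : MeasurePreserving S (normRestrict (cyl σ ε)) (normRestrict (cyl σ ε))) (f : E3 → ℝ)
    (hf : Integrable f (normRestrict (cyl σ ε))) :
    Integrable (fun p => f p + f (S p)) (normRestrict (cyl σ ε)) ∧
    ∫ p, (f p + f (S p)) ∂(normRestrict (cyl σ ε)) = 2 * ∫ p, f p ∂(normRestrict (cyl σ ε)) := by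
  have h2 : Integrable (fun p => f (S p)) (normRestrict (cyl σ ε)) :=
    (h.integrable_comp_emb S.toHomeomorph.measurableEmbedding).2 hf
  refine ⟨hf.add h2, ?_⟩
  rw [integral_add hf h2, nu_comp σ ε S h f]
  ring

lemma pos_cyl (a b x y S : ℝ) (h : (a ^ 2 + b ^ 2) * S < 1) (hx : x ^ 2 + y ^ 2 < S) :
    0 < 1 - a * x - b * y := by
  have h1 : (a * x + b * y) ^ 2 ≤ (a ^ 2 + b ^ 2) * (x ^ 2 + y ^ 2) := by
    nlinarith [sq_nonneg (a * y - b * x)]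
  have h2 : (a ^ 2 + b ^ 2) * (x ^ 2 + y ^ 2) ≤ (a ^ 2 + b ^ 2) * S := by
    apply mul_le_mul_of_nonneg_left hx.le; positivity
  nlinarith

lemma mm_int (k1 k2 : ℝ → ℝ) (σ ε : ℝ) (h1 : Measurable k1) (h2 : Measurable k2)
    (hk : ∀ s ∈ Ioo (-ε) ε, (k1 s ^ 2 + k2 s ^ 2) * σ ^ 2 < 1) (f : E3 → ℝ) :
    ∫ p, f p ∂((volume (cyl σ ε))⁻¹ • mm k1 k2 σ ε) =
      ∫ p, f p * (1 - k1 (p 0) * p 1 - k2 (p 0) * p 2) ∂(normRestrict (cyl σ ε)) := by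
  rw [nu_int, integral_smul_measure, ENNReal.toReal_inv, smul_eq_mul]
  congr 1
  rw [mm, integral_withDensity_eq_integral_toReal_smul (dens_meas k1 k2 h1 h2)
    (Filter.Eventually.of_forall fun p => by simp [dens])]
  apply setIntegral_congr_fun (cyl_meas σ ε)
  intro p hp
  have := pos_cyl _ _ _ _ _ (hk _ hp.1) hp.2
  simp only [dens, abs_of_pos this, smul_eq_mul, ENNReal.toReal_ofReal this.le]
  ring

lemma nu_r2 (σ ε : ℝ) (hσ : 0 < σ) (hε : 0 < ε) :
    ∫ p, (p 1 ^ 2 + p 2 ^ 2) ∂(normRestrict (cyl σ ε)) = σ ^ 2 / 2 := by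
  have hP := nu_prob σ ε hσ hε
  set κ : ℝ := 1 / (2 * σ) with hκ
  have hκ0 : 0 < κ := by positivity
  have hκσ : κ * σ = 1 / 2 := by rw [hκ]; field_simp
  have hk : ∀ s ∈ Ioo (-ε) ε, ((fun _ => κ : ℝ → ℝ) s ^ 2 + (fun _ => 0 : ℝ → ℝ) s ^ 2) * σ ^ 2 < 1 := by
    intro s _
    have : (κ ^ 2 + 0 ^ 2) * σ ^ 2 = (κ * σ) ^ 2 := by ring
    simp only [this, hκσ]; norm_num
  have fm := flat_map (fun _ => κ) (fun _ => 0) σ ε (fun _ _ => by fun_prop) (fun _ _ => by fun_prop) hk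
  have m1 : Measurable (fun p : E3 => p 1) := by fun_prop
  have e1 : ∫ q, q 1 ∂(normRestrict (cyl σ ε)) =
      ∫ p, (p 1 + κ * ((σ ^ 2 - p 1 ^ 2 - p 2 ^ 2) / 2)) * (1 - κ * p 1 - 0 * p 2) ∂(normRestrict (cyl σ ε)) := by
    rw [← mm_int (fun _ => κ) (fun _ => 0) σ ε (by fun_prop) (by fun_prop) hk
      (fun p => p 1 + κ * ((σ ^ 2 - p 1 ^ 2 - p 2 ^ 2) / 2))]
    unfold normRestrict
    rw [← fm, ← Measure.map_smul, integral_map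
      (flat_meas (fun _ => κ) (fun _ => 0) σ measurable_const measurable_const).aemeasurable m1.aestronglyMeasurable]
    rfl
  have e0 : ∫ q, q 1 ∂(normRestrict (cyl σ ε)) = 0 := by
    have := nu_comp σ ε (flipE 1) (nu_flip σ ε 1) (fun q => q 1)
    simp only [flipE_apply, if_true] at this
    rw [integral_neg] at this
    linarith
  set F : E3 → ℝ := fun p => (p 1 + κ * ((σ ^ 2 - p 1 ^ 2 - p 2 ^ 2) / 2)) * (1 - κ * p 1 - 0 * p 2) with hF
  set G : E3 → ℝ := fun p => F p + F (flipE 1 p) with hG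
  have bd : ∀ f : E3 → ℝ, Continuous f → Integrable f (normRestrict (cyl σ ε)) := by
    intro f hf
    obtain ⟨K, hK⟩ := (isCompact_closedBall (0:E3) (Real.sqrt (ε^2+σ^2))).exists_bound_of_continuousOn hf.continuousOn
    refine nu_integrable σ ε hσ hε f hf.measurable K fun p hp => hK p ?_
    rw [mem_closedBall_zero_iff]
    exact Real.le_sqrt_of_sq_le (cyl_norm σ ε p hp).le
  have cF : Continuous F := by rw [hF]; fun_prop
  have i1 := nu_avg σ ε (flipE 1) (nu_flip σ ε 1) F (bd F cF)
  have i2 := (nu_avg σ ε swapE (nu_swap σ ε) G i1.1).2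
  rw [i1.2, ← e1, e0] at i2
  have i3 : ∀ p, G p + G (swapE p) = 4 * κ * (σ ^ 2 / 2 - (p 1 ^ 2 + p 2 ^ 2)) := by
    intro p
    simp [hG, hF, flipE_apply, swapE_1, swapE_2]
    ring
  simp_rw [i3] at i2
  rw [integral_const_mul, integral_sub (integrable_const _) (bd _ (by fun_prop))] at i2
  simp at i2
  rcases i2 with h | h
  · exact absurd h hκ0.ne'
  · linarith

lemma flip_mem (σ ε : ℝ) (i : Fin 3) (p : E3) (hp : p ∈ cyl σ ε) : flipE i p ∈ cyl σ ε := by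
  revert hp
  fin_cases i <;> simp [cyl, flipE_apply, neg_lt]
  all_goals tauto

lemma inner_le_u (v u : E3) (hu : ‖u‖ = 1) (c : ℝ) (h : ‖v‖ ≤ c) : |(inner ℝ v u : ℝ)| ≤ c := by
  refine (abs_real_inner_le_norm v u).trans ?_
  rw [hu, mul_one]; exact h

lemma mean_val (σ ε : ℝ) (hσ : 0 < σ) (hε : 0 < ε) (g e1 e2 a : ℝ → E3) (k1 k2 : ℝ → ℝ)
    (u g0 a0 : E3) (hu : ‖u‖ = 1) (K L : ℝ) (hK : 0 ≤ K)
    (mg : Measurable g) (me1 : Measurable e1) (me2 : Measurable e2)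
    (h1 : Measurable k1) (h2 : Measurable k2)
    (hL : ∀ p ∈ cyl σ ε, |(inner ℝ (psi g e1 e2 p) u : ℝ) * (1 - k1 (p 0) * p 1 - k2 (p 0) * p 2)| ≤ L)
    (ha : ∀ s ∈ Ioo (-ε) ε, k1 s • e1 s + k2 s • e2 s = a s)
    (T1 : ∀ s ∈ Ioo (-ε) ε, ‖g s + g (-s) - (2:ℝ) • g0 - s ^ 2 • a0‖ ≤ 2 * K * s ^ 4)
    (T2 : ∀ s ∈ Ioo (-ε) ε, ‖a s + a (-s) - (2:ℝ) • a0‖ ≤ 2 * K * s ^ 2) :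
    |∫ p, (inner ℝ (psi g e1 e2 p) u : ℝ) * (1 - k1 (p 0) * p 1 - k2 (p 0) * p 2) ∂(normRestrict (cyl σ ε))
      - (inner ℝ g0 u + (ε ^ 2 / 6 - σ ^ 2 / 4) * (inner ℝ a0 u))| ≤ K * (ε ^ 4 + σ ^ 2 * ε ^ 2) := by
  have hP := nu_prob σ ε hσ hε
  set ν := normRestrict (cyl σ ε) with hν
  set f : E3 → ℝ := fun p => (inner ℝ (psi g e1 e2 p) u : ℝ) * (1 - k1 (p 0) * p 1 - k2 (p 0) * p 2) with hf
  have m : ∀ i : Fin 3, Measurable (fun q : E3 => q i) := fun i => by fun_prop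
  have mf : Measurable f := by
    have c1 : Measurable (fun q : E3 => k1 (q 0)) := h1.comp (m 0)
    have c2 : Measurable (fun q : E3 => k2 (q 0)) := h2.comp (m 0)
    have m1 := m 1
    have m2 := m 2
    have := psi_meas g e1 e2 mg me1 me2
    have h3 : Measurable (fun p => (inner ℝ (psi g e1 e2 p) u : ℝ)) := by fun_prop
    rw [hf]
    fun_prop
  have If : Integrable f ν := nu_integrable σ ε hσ hε f mf L hL
  have i1 := nu_avg σ ε (flipE 1) (nu_flip σ ε 1) f If
  have i2 := nu_avg σ ε (flipE 2) (nu_flip σ ε 2) _ i1.1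
  have i3 := nu_avg σ ε swapE (nu_swap σ ε) _ i2.1
  have i4 := nu_avg σ ε (flipE 0) (nu_flip σ ε 0) _ i3.1
  rw [i3.2, i2.2, i1.2] at i4
  obtain ⟨I4, E4⟩ := i4
  set F : E3 → ℝ := fun p => 8 * ((inner ℝ (g (p 0) + g (-(p 0))) u : ℝ) -
      (p 1 ^ 2 + p 2 ^ 2) / 2 * (inner ℝ (a (p 0) + a (-(p 0))) u : ℝ)) with hF
  have hcong : (fun p => f p + f (flipE 1 p) + (f (flipE 2 p) + f (flipE 1 (flipE 2 p))) +
      (f (swapE p) + f (flipE 1 (swapE p)) + (f (flipE 2 (swapE p)) + f (flipE 1 (flipE 2 (swapE p))))) +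
      (f (flipE 0 p) + f (flipE 1 (flipE 0 p)) + (f (flipE 2 (flipE 0 p)) + f (flipE 1 (flipE 2 (flipE 0 p)))) +
      (f (swapE (flipE 0 p)) + f (flipE 1 (swapE (flipE 0 p))) + (f (flipE 2 (swapE (flipE 0 p))) + f (flipE 1 (flipE 2 (swapE (flipE 0 p)))))))) =ᵐ[ν] F := by
    filter_upwards [nu_ae σ ε] with p hp
    have hs := hp.1
    have hs' : -(p 0) ∈ Ioo (-ε) ε := ⟨by linarith [hs.2], by linarith [hs.1]⟩
    simp only [hF, hf, psi, ← ha _ hs, ← ha _ hs', inner_add_left, inner_smul_left, flipE_apply,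
      swapE_0, swapE_1, swapE_2]
    simp
    ring
  have IF := I4.congr hcong
  rw [integral_congr_ae hcong] at E4
  have is2 : Integrable (fun p : E3 => p 0 ^ 2) ν := by
    refine nu_integrable σ ε hσ hε _ ((m 0).pow_const 2) (ε ^ 2) fun p hp => ?_
    rw [abs_of_nonneg (sq_nonneg _)]; exact (sq_le_of_cyl σ ε p hp).1
  have ir2 : Integrable (fun p : E3 => p 1 ^ 2 + p 2 ^ 2) ν := by
    refine nu_integrable σ ε hσ hε _ (((m 1).pow_const 2).add ((m 2).pow_const 2)) (σ ^ 2) fun p hp => ?_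
    rw [abs_of_nonneg (by positivity)]; exact hp.2.le
  have E5 : ∫ p, (16 * (inner ℝ g0 u + (p 0 ^ 2 * (inner ℝ a0 u / 2) - (p 1 ^ 2 + p 2 ^ 2) * (inner ℝ a0 u / 2)))) ∂ν
      = 16 * (inner ℝ g0 u + (ε ^ 2 / 6 - σ ^ 2 / 4) * (inner ℝ a0 u)) := by
    have ii : Integrable (fun p : E3 => p 0 ^ 2 * (inner ℝ a0 u / 2) - (p 1 ^ 2 + p 2 ^ 2) * (inner ℝ a0 u / 2)) ν :=
      (is2.mul_const _).sub (ir2.mul_const _)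
    rw [integral_const_mul, integral_add (integrable_const _) ii,
      integral_sub (is2.mul_const _) (ir2.mul_const _), integral_mul_const, integral_mul_const,
      nu_s2 σ ε hσ hε, nu_r2 σ ε hσ hε]
    simp
    ring
  have I5 : Integrable (fun p : E3 => (16 * (inner ℝ g0 u + (p 0 ^ 2 * (inner ℝ a0 u / 2) - (p 1 ^ 2 + p 2 ^ 2) * (inner ℝ a0 u / 2))))) ν :=
    ((integrable_const _).add ((is2.mul_const _).sub (ir2.mul_const _))).const_mul _
  have E6 := integral_sub IF I5
  have bnd : ‖∫ p, (F p - (16 * (inner ℝ g0 u + (p 0 ^ 2 * (inner ℝ a0 u / 2) - (p 1 ^ 2 + p 2 ^ 2) * (inner ℝ a0 u / 2))))) ∂ν‖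
      ≤ 16 * (K * (ε ^ 4 + σ ^ 2 * ε ^ 2)) := by
    refine (norm_integral_le_of_norm_le_const (C := 16 * (K * (ε ^ 4 + σ ^ 2 * ε ^ 2))) ?_).trans (by simp)
    filter_upwards [nu_ae σ ε] with p hp
    have hs := hp.1
    have b1 := inner_le_u _ u hu _ (T1 _ hs)
    have b2 := inner_le_u _ u hu _ (T2 _ hs)
    have q := sq_le_of_cyl σ ε p hp
    have q4 : p 0 ^ 4 ≤ ε ^ 4 := by nlinarith [sq_nonneg (p 0)]
    have hr := hp.2.le
    have e : F p - (16 * (inner ℝ g0 u + (p 0 ^ 2 * (inner ℝ a0 u / 2) - (p 1 ^ 2 + p 2 ^ 2) * (inner ℝ a0 u / 2))))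
      = 8 * inner ℝ (g (p 0) + g (-p 0) - (2:ℝ) • g0 - p 0 ^ 2 • a0) u
        - 4 * (p 1 ^ 2 + p 2 ^ 2) * inner ℝ (a (p 0) + a (-p 0) - (2:ℝ) • a0) u := by
      simp only [hF, inner_add_left, inner_sub_left, inner_smul_left]
      simp
      ring
    rw [e, Real.norm_eq_abs]
    refine (abs_sub _ _).trans ?_
    rw [abs_mul, abs_mul, abs_of_nonneg (by positivity : (0:ℝ) ≤ 4 * (p 1 ^ 2 + p 2 ^ 2)), abs_of_pos (by norm_num : (0:ℝ) < 8)]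
    have c2 : 4 * (p 1 ^ 2 + p 2 ^ 2) * |(inner ℝ (a (p 0) + a (-p 0) - (2:ℝ) • a0) u : ℝ)| ≤
      4 * σ ^ 2 * (2 * K * ε ^ 2) := by
      apply mul_le_mul (by linarith) (b2.trans (by nlinarith)) (abs_nonneg _) (by positivity)
    have c1 : 2 * K * p 0 ^ 4 ≤ 2 * K * ε ^ 4 := by nlinarith
    have : 0 ≤ K * (σ ^ 2 * ε ^ 2) := by positivity
    nlinarith
  rw [E6, E5, E4, Real.norm_eq_abs, ← hf] at bnd
  rw [abs_le] at bnd ⊢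
  constructor <;> linarith [bnd.1, bnd.2]

lemma mv {E : Type*} [NormedAddCommGroup E] [NormedSpace ℝ E] (f f' : ℝ → E) (C r : ℝ) (m : ℕ) (hC : 0 ≤ C)
    (hd : ∀ s, HasDerivAt f (f' s) s) (h0 : f 0 = 0) (hb : ∀ s, |s| ≤ r → ‖f' s‖ ≤ C * |s| ^ m) :
    ∀ s, |s| ≤ r → ‖f s‖ ≤ C * |s| ^ (m + 1) := by
  intro s hs
  have hcv : Convex ℝ (Icc (-|s|) |s|) := convex_Icc _ _
  have := hcv.norm_image_sub_le_of_norm_hasDerivWithin_le (f := f) (f' := f') (C := C * |s| ^ m) (x := 0) (y := s)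
    (fun x _ => (hd x).hasDerivWithinAt) (fun x hx => by
      have hx' : |x| ≤ |s| := abs_le.2 hx
      refine (hb x (hx'.trans hs)).trans ?_
      gcongr)
    ⟨by simp, by simp⟩ ⟨neg_abs_le s, le_abs_self s⟩
  rw [h0, sub_zero, sub_zero, Real.norm_eq_abs] at this
  rw [pow_succ, ← mul_assoc]; exact this

section
variable {E : Type*} [NormedAddCommGroup E] [NormedSpace ℝ E]

lemma lip (f f' : ℝ → E) (K : ℝ) (hd : ∀ s, HasDerivAt f (f' s) s)
    (hb : ∀ s ∈ Icc (-3:ℝ) 3, ‖f' s‖ ≤ K) (a b : ℝ) (ha : a ∈ Icc (-3:ℝ) 3) (hb' : b ∈ Icc (-3:ℝ) 3) :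
    ‖f b - f a‖ ≤ K * |b - a| := by
  exact (convex_Icc (-3:ℝ) 3).norm_image_sub_le_of_norm_hasDerivWithin_le
    (fun x _ => (hd x).hasDerivWithinAt) hb ha hb'

lemma mem3 (t s : ℝ) (ht : t ∈ Icc (-1:ℝ) 2) (hs : |s| ≤ 1) : t + s ∈ Icc (-3:ℝ) 3 ∧ t - s ∈ Icc (-3:ℝ) 3 := by
  rw [abs_le] at hs
  exact ⟨⟨by linarith [ht.1], by linarith [ht.2]⟩, ⟨by linarith [ht.1], by linarith [ht.2]⟩⟩

lemma tay1 (f f' : ℝ → E) (f'' : ℝ → E) (K : ℝ) (hK : 0 ≤ K) (hd : ∀ s, HasDerivAt f (f' s) s)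
    (hd' : ∀ s, HasDerivAt f' (f'' s) s) (hb : ∀ s ∈ Icc (-3:ℝ) 3, ‖f'' s‖ ≤ K) (t : ℝ) (ht : t ∈ Icc (-1:ℝ) 2) (s : ℝ) (hs : |s| ≤ 1) :
    ‖f (t + s) - f t - s • f' t‖ ≤ K * s ^ 2 := by
  have p : ∀ s, HasDerivAt (fun s => f (t + s)) (f' (t + s)) s := fun s => by
    simpa using (hd (t + s)).comp_const_add t s
  have q : ∀ s : ℝ, HasDerivAt (fun s : ℝ => s • f' t) (f' t) s := fun s => by
    simpa using (hasDerivAt_id s).smul_const (f' t)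
  have := mv (fun s => f (t + s) - f t - s • f' t) (fun s => f' (t + s) - f' t) K 1 1 hK
    (fun s => ((p s).sub_const _).sub (q s)) (by simp) (fun s hs => by
      have := lip f' f'' K hd' hb t (t + s) ⟨by linarith [ht.1], by linarith [ht.2]⟩ (mem3 t s ht hs).1
      simpa using this) s hs
  simpa using this

lemma tayS2 (f f' f'' : ℝ → E) (K : ℝ) (hK : 0 ≤ K) (hd : ∀ s, HasDerivAt f (f' s) s)
    (hd' : ∀ s, HasDerivAt f' (f'' s) s) (hb : ∀ s ∈ Icc (-3:ℝ) 3, ‖f'' s‖ ≤ K)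
    (t : ℝ) (ht : t ∈ Icc (-1:ℝ) 2) (s : ℝ) (hs : |s| ≤ 1) :
    ‖f (t + s) + f (t - s) - (2:ℝ) • f t‖ ≤ 2 * K * s ^ 2 := by
  have a := tay1 f f' f'' K hK hd hd' hb t ht s hs
  have b := tay1 f f' f'' K hK hd hd' hb t ht (-s) (by simpa using hs)
  have e : f (t + s) + f (t - s) - (2:ℝ) • f t = (f (t + s) - f t - s • f' t) + (f (t + -s) - f t - (-s) • f' t) := by
    rw [two_smul, neg_smul, ← sub_eq_add_neg]; abel
  rw [e]
  refine (norm_add_le _ _).trans ?_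
  rw [neg_sq] at b
  linarith

lemma hadd (f f' : ℝ → E) (t : ℝ) (hd : ∀ s, HasDerivAt f (f' s) s) (s : ℝ) :
    HasDerivAt (fun s => f (t + s)) (f' (t + s)) s := by
  simpa using (hd (t + s)).comp_const_add t s

lemma hsub (f f' : ℝ → E) (t : ℝ) (hd : ∀ s, HasDerivAt f (f' s) s) (s : ℝ) :
    HasDerivAt (fun s => f (t - s)) (- f' (t - s)) s := by
  simpa using (hd (t - s)).comp_const_sub t s

lemma tayA3 (f f' f'' f3 : ℝ → E) (K : ℝ) (hK : 0 ≤ K) (hd : ∀ s, HasDerivAt f (f' s) s)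
    (hd' : ∀ s, HasDerivAt f' (f'' s) s) (hd'' : ∀ s, HasDerivAt f'' (f3 s) s)
    (hb : ∀ s ∈ Icc (-3:ℝ) 3, ‖f3 s‖ ≤ K)
    (t : ℝ) (ht : t ∈ Icc (-1:ℝ) 2) (s : ℝ) (hs : |s| ≤ 1) :
    ‖f (t + s) - f (t - s) - (2 * s) • f' t‖ ≤ 2 * K * |s| ^ 3 := by
  refine mv (fun s => f (t + s) - f (t - s) - (2 * s) • f' t)
    (fun s => f' (t + s) + f' (t - s) - (2:ℝ) • f' t) (2 * K) 1 2 (by positivity) (fun s => ?_) (by simp)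
    (fun s hs => ?_) s hs
  · have q : HasDerivAt (fun s : ℝ => (2 * s) • f' t) ((2:ℝ) • f' t) s := by
      simpa using ((hasDerivAt_id s).const_mul 2).smul_const (f' t)
    refine (((hadd f f' t hd s).sub (hsub f f' t hd s)).sub q).congr_deriv ?_
    rw [sub_neg_eq_add]
  · rw [sq_abs]
    exact tayS2 f' f'' f3 K hK hd' hd'' hb t ht s hs

lemma tayS4 (f f' f'' f3 f4 : ℝ → E) (K : ℝ) (hK : 0 ≤ K) (hd : ∀ s, HasDerivAt f (f' s) s)
    (hd' : ∀ s, HasDerivAt f' (f'' s) s) (hd'' : ∀ s, HasDerivAt f'' (f3 s) s) (hd3 : ∀ s, HasDerivAt f3 (f4 s) s)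
    (hb : ∀ s ∈ Icc (-3:ℝ) 3, ‖f4 s‖ ≤ K)
    (t : ℝ) (ht : t ∈ Icc (-1:ℝ) 2) (s : ℝ) (hs : |s| ≤ 1) :
    ‖f (t + s) + f (t - s) - (2:ℝ) • f t - s ^ 2 • f'' t‖ ≤ 2 * K * s ^ 4 := by
  have := mv (fun s => f (t + s) + f (t - s) - (2:ℝ) • f t - s ^ 2 • f'' t)
    (fun s => f' (t + s) - f' (t - s) - (2 * s) • f'' t) (2 * K) 1 3 (by positivity) (fun s => ?_)
    (by simp [two_smul]) (fun s hs => tayA3 f' f'' f3 f4 K hK hd' hd'' hd3 hb t ht s hs) s hs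
  · rwa [show |s| ^ (3 + 1) = s ^ 4 by rw [show 3 + 1 = 2 * 2 by norm_num, pow_mul, sq_abs, ← pow_mul]] at this
  · have q : HasDerivAt (fun s : ℝ => (s ^ 2) • f'' t) ((2 * s) • f'' t) s := by
      simpa using ((hasDerivAt_id s).pow 2).smul_const (f'' t)
    refine ((((hadd f f' t hd s).add (hsub f f' t hd s)).sub_const ((2:ℝ) • f t)).sub q).congr_deriv ?_
    rw [sub_eq_add_neg (f' (t + s))]
end

noncomputable def phi (T : ℝ → EuclideanSpace ℝ (Fin 3)) (v : EuclideanSpace ℝ (Fin 3)) (α : ℝ) : ℝ :=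
  inner ℝ v (T α) / (1 + inner ℝ (T 0) (T α))

noncomputable def fr (T : ℝ → EuclideanSpace ℝ (Fin 3)) (v : EuclideanSpace ℝ (Fin 3)) (α : ℝ) :
    EuclideanSpace ℝ (Fin 3) := v - phi T v α • (T 0 + T α)

lemma fr_T (T : ℝ → E3) (v : E3) (α : ℝ) (hT : ∀ α, ‖T α‖ = 1) (hd : 0 < (1 + inner ℝ (T 0) (T α) : ℝ)) :
    inner ℝ (fr T v α) (T α) = (0:ℝ) := by
  unfold fr phi
  rw [inner_sub_left, inner_smul_left, inner_add_left, real_inner_self_eq_norm_sq, hT]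
  simp
  field_simp
  ring

lemma fr_fr (T : ℝ → E3) (v w : E3) (α : ℝ) (hT : ∀ α, ‖T α‖ = 1) (hd : 0 < (1 + inner ℝ (T 0) (T α) : ℝ))
    (hv : inner ℝ v (T 0) = (0:ℝ)) (hw : inner ℝ w (T 0) = (0:ℝ)) :
    inner ℝ (fr T v α) (fr T w α) = (inner ℝ v w : ℝ) := by
  unfold fr phi
  simp only [inner_sub_left, inner_sub_right, inner_smul_left, inner_smul_right, inner_add_left, inner_add_right,
    real_inner_self_eq_norm_sq, hT, hv, real_inner_comm (T 0) (T α)]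
  rw [real_inner_comm w (T 0), real_inner_comm w (T α), hw]
  simp
  simp only [real_inner_comm (T α) (T 0)] at hd ⊢
  generalize (inner ℝ (T α) (T 0) : ℝ) = d at hd ⊢
  have := hd.ne'
  field_simp
  ring

lemma fr_diff (T A : ℝ → E3) (v : E3) (α : ℝ) (hTA : ∀ α, HasDerivAt T (A α) α)
    (hd : 0 < (1 + inner ℝ (T 0) (T α) : ℝ)) : DifferentiableAt ℝ (fr T v) α := by
  have h1 : DifferentiableAt ℝ T α := (hTA α).differentiableAt
  have h2 : DifferentiableAt ℝ (fun α => (inner ℝ v (T α) : ℝ)) α := (differentiableAt_const v).inner ℝ h1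
  have h3 : DifferentiableAt ℝ (fun α => (1 + inner ℝ (T 0) (T α) : ℝ)) α :=
    (differentiableAt_const _).add ((differentiableAt_const (T 0)).inner ℝ h1)
  have h4 : DifferentiableAt ℝ (phi T v) α := h2.div h3 hd.ne'
  exact (differentiableAt_const v).sub (h4.smul ((differentiableAt_const _).add h1))

lemma fr_meas (T : ℝ → E3) (v : E3) (hT : Continuous T) : Measurable (fr T v) := by
  have h1 : Measurable T := hT.measurable
  have h2 : Continuous (fun α => (inner ℝ v (T α) : ℝ)) := by fun_prop
  have h3 : Continuous (fun α => (1 + inner ℝ (T 0) (T α) : ℝ)) := by fun_prop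
  have h4 : Measurable (phi T v) := h2.measurable.div h3.measurable
  exact measurable_const.sub (h4.smul (measurable_const.add h1))

lemma fr_deriv (T A : ℝ → E3) (v : E3) (α : ℝ) (hT : ∀ α, ‖T α‖ = 1) (hTA : ∀ α, HasDerivAt T (A α) α)
    (hd : 0 < (1 + inner ℝ (T 0) (T α) : ℝ)) :
    inner ℝ (deriv (fr T v) α) (T α) = - (inner ℝ (A α) (fr T v α) : ℝ) := by
  have hcT : Continuous T := continuous_iff_continuousAt.2 fun x => (hTA x).continuousAt
  have hc : Continuous (fun α => (1 + inner ℝ (T 0) (T α) : ℝ)) := by fun_prop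
  have hev : (fun x => (inner ℝ (fr T v x) (T x) : ℝ)) =ᶠ[nhds α] fun _ => 0 := by
    filter_upwards [hc.continuousAt.eventually (lt_mem_nhds hd)] with x hx
    exact fr_T T v x hT hx
  have h1 := ((fr_diff T A v α hTA hd).hasDerivAt).inner ℝ (hTA α)
  have h2 := (hev.hasDerivAt_iff).1 h1
  have := h2.unique (hasDerivAt_const α 0)
  rw [real_inner_comm (fr T v α) (A α)]
  linarith

lemma tube_t (γ T A B : ℝ → E3) (v1 v2 : E3) (t σ ε : ℝ) (hγT : ∀ α, HasDerivAt γ (T α) α)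
    (hTA : ∀ α, HasDerivAt T (A α) α) (hAB : ∀ α, HasDerivAt A (B α) α)
    (hT : ∀ α, ‖T α‖ = 1) (o1 : inner ℝ v1 v1 = (1:ℝ)) (o2 : inner ℝ v2 v2 = (1:ℝ))
    (o12 : inner ℝ v1 v2 = (0:ℝ)) (oT1 : inner ℝ v1 (T 0) = (0:ℝ)) (oT2 : inner ℝ v2 (T 0) = (0:ℝ))
    (hd : ∀ s ∈ Ioo (-ε) ε, 0 < (1 + inner ℝ (T 0) (T (t + s)) : ℝ))
    (hk : ∀ s ∈ Ioo (-ε) ε, ((inner ℝ (A (t + s)) (fr T v1 (t + s)) : ℝ) ^ 2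
      + (inner ℝ (A (t + s)) (fr T v2 (t + s)) : ℝ) ^ 2) * σ ^ 2 < 1)
    (hinj : InjOn (psi (fun s => γ (t + s)) (fun s => fr T v1 (t + s)) (fun s => fr T v2 (t + s))) (cyl σ ε)) :
    normRestrict (psi (fun s => γ (t + s)) (fun s => fr T v1 (t + s)) (fun s => fr T v2 (t + s)) '' cyl σ ε) =
        (normRestrict (cyl σ ε)).map (psi (fun s => γ (t + s)) (fun s => fr T v1 (t + s)) (fun s => fr T v2 (t + s))
          ∘ unflat (fun s => inner ℝ (A (t + s)) (fr T v1 (t + s))) (fun s => inner ℝ (A (t + s)) (fr T v2 (t + s))) σ) ∧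
    normRestrict (psi (fun s => γ (t + s)) (fun s => fr T v1 (t + s)) (fun s => fr T v2 (t + s)) '' cyl σ ε) =
        ((volume (cyl σ ε))⁻¹ • mm (fun s => inner ℝ (A (t + s)) (fr T v1 (t + s))) (fun s => inner ℝ (A (t + s)) (fr T v2 (t + s))) σ ε).map (psi (fun s => γ (t + s)) (fun s => fr T v1 (t + s)) (fun s => fr T v2 (t + s))) := by
  have cγ : Continuous γ := continuous_iff_continuousAt.2 fun x => (hγT x).continuousAt
  have cT : Continuous T := continuous_iff_continuousAt.2 fun x => (hTA x).continuousAt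
  have cA : Continuous A := continuous_iff_continuousAt.2 fun x => (hAB x).continuousAt
  have mt : Measurable (fun s : ℝ => t + s) := by fun_prop
  have mA : Measurable (fun s => A (t + s)) := cA.measurable.comp mt
  have m1 : Measurable (fun s => fr T v1 (t + s)) := (fr_meas T v1 cT).comp mt
  have m2 : Measurable (fun s => fr T v2 (t + s)) := (fr_meas T v2 cT).comp mt
  have dd : ∀ v, ∀ s ∈ Ioo (-ε) ε, HasDerivAt (fun s => fr T v (t + s)) (deriv (fr T v) (t + s)) s := fun v s hs =>
    (fr_diff T A v (t + s) hTA (hd s hs)).hasDerivAt.comp_const_add t s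
  have dA : ∀ s, HasDerivAt (fun s => A (t + s)) (B (t + s)) s := fun s => (hAB (t + s)).comp_const_add t s
  refine tube_param (fun s => γ (t + s)) (fun s => T (t + s)) (fun s => fr T v1 (t + s)) (fun s => fr T v2 (t + s))
    (fun s => deriv (fr T v1) (t + s)) (fun s => deriv (fr T v2) (t + s)) _ _ σ ε (cγ.measurable.comp mt) m1 m2
    (mA.inner m1) (mA.inner m2)
    (fun s hs => (dA s).differentiableAt.inner ℝ (dd v1 s hs).differentiableAt)
    (fun s hs => (dA s).differentiableAt.inner ℝ (dd v2 s hs).differentiableAt) hk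
    (fun s _ => (hγT (t + s)).comp_const_add t s) (dd v1) (dd v2) ?_ ?_ ?_ ?_ ?_ ?_ ?_ ?_ hinj
  · intro s _; rw [real_inner_self_eq_norm_sq, hT]; norm_num
  · intro s hs; exact (fr_fr T v1 v1 _ hT (hd s hs) oT1 oT1).trans o1
  · intro s hs; exact (fr_fr T v2 v2 _ hT (hd s hs) oT2 oT2).trans o2
  · intro s hs; exact fr_T T v1 _ hT (hd s hs)
  · intro s hs; exact fr_T T v2 _ hT (hd s hs)
  · intro s hs; exact (fr_fr T v1 v2 _ hT (hd s hs) oT1 oT2).trans o12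
  · intro s hs; exact fr_deriv T A v1 _ hT hTA (hd s hs)
  · intro s hs; exact fr_deriv T A v2 _ hT hTA (hd s hs)

/-- orthonormal frame -/
def ONF (T f1 f2 : EuclideanSpace ℝ (Fin 3)) : Prop :=
  inner ℝ T T = (1:ℝ) ∧ inner ℝ f1 f1 = (1:ℝ) ∧ inner ℝ f2 f2 = (1:ℝ) ∧ inner ℝ f1 T = (0:ℝ) ∧
  inner ℝ f2 T = (0:ℝ) ∧ inner ℝ f1 f2 = (0:ℝ)

lemma reframe (T f1 f2 g1 g2 : E3) (hf : ONF T f1 f2) (hg : ONF T g1 g2) (x y : ℝ) :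
    ∃ x' y' : ℝ, x • f1 + y • f2 = x' • g1 + y' • g2 ∧ x' ^ 2 + y' ^ 2 = x ^ 2 + y ^ 2 := by
  obtain ⟨a1, a2, a3, a4, a5, a6⟩ := hf
  obtain ⟨b1, b2, b3, b4, b5, b6⟩ := hg
  set v := x • f1 + y • f2 with hv
  have hvT : inner ℝ v T = (0:ℝ) := by
    rw [hv, inner_add_left, inner_smul_left, inner_smul_left, a4, a5]; simp
  have hvv : inner ℝ v v = x ^ 2 + y ^ 2 := by
    simp only [hv, inner_add_left, inner_smul_left, inner_add_right, inner_smul_right, a2, a3, a6,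
      real_inner_comm f1 f2]
    simp; ring
  refine ⟨inner ℝ v g1, inner ℝ v g2, ?_, ?_⟩
  · have := frame_expand T g1 g2 b1 b2 b3 b4 b5 b6 v
    rw [hvT, zero_smul, zero_add] at this
    exact this
  · have := frame_parseval T g1 g2 b1 b2 b3 b4 b5 b6 v v
    rw [hvv, hvT] at this
    linarith

lemma frame_inj (T f1 f2 : E3) (hf : ONF T f1 f2) (x y x' y' : ℝ) (h : x • f1 + y • f2 = x' • f1 + y' • f2) :
    x = x' ∧ y = y' := by
  obtain ⟨a1, a2, a3, a4, a5, a6⟩ := hf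
  have e1 := congrArg (fun v => (inner ℝ v f1 : ℝ)) h
  have e2 := congrArg (fun v => (inner ℝ v f2 : ℝ)) h
  simp only [inner_add_left, inner_smul_left, a2, a3, a6, real_inner_comm f1 f2] at e1 e2
  simp at e1 e2
  exact ⟨e1, e2⟩

lemma tube_set (γ T n b e1 e2 : ℝ → E3) (Ψ : ℝ × ℝ × ℝ → E3) (δ₀ t σ ε : ℝ)
    (hΨ : ∀ p : ℝ × ℝ × ℝ, Ψ p = γ p.1 + p.2.1 • n p.1 + p.2.2 • b p.1)
    (hinj : InjOn Ψ {p : ℝ × ℝ × ℝ |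
      p.1 ∈ Icc (-δ₀) (2 * δ₀) ∧ p.2.1 ^ 2 + p.2.2 ^ 2 ≤ δ₀ ^ 2})
    (hr : ∀ s ∈ Ioo (-ε) ε, t + s ∈ Icc (-δ₀) (2 * δ₀)) (hσ : σ ^ 2 ≤ δ₀ ^ 2)
    (hnb : ∀ s ∈ Ioo (-ε) ε, ONF (T (t + s)) (n (t + s)) (b (t + s)))
    (he : ∀ s ∈ Ioo (-ε) ε, ONF (T (t + s)) (e1 (t + s)) (e2 (t + s))) :
    Ψ '' {p : ℝ × ℝ × ℝ | p.1 ∈ Ioo (t - ε) (t + ε) ∧ p.2.1 ^ 2 + p.2.2 ^ 2 < σ ^ 2} =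
      psi (fun s => γ (t + s)) (fun s => e1 (t + s)) (fun s => e2 (t + s)) '' cyl σ ε ∧
    InjOn (psi (fun s => γ (t + s)) (fun s => e1 (t + s)) (fun s => e2 (t + s))) (cyl σ ε) := by
  constructor
  · apply Subset.antisymm
    · rintro _ ⟨⟨α, x, y⟩, ⟨hα, hxy⟩, rfl⟩
      simp only at hα hxy
      have hs : α - t ∈ Ioo (-ε) ε := ⟨by linarith [hα.1], by linarith [hα.2]⟩
      have hn := hnb _ hs
      have hee := he _ hs
      rw [add_sub_cancel] at hn hee
      obtain ⟨x', y', h1, h2⟩ := reframe _ _ _ _ _ hn hee x y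
      refine ⟨!₂[α - t, x', y'], ⟨by simpa using hs, ?_⟩, ?_⟩
      · simpa [h2] using hxy
      · simp [psi, hΨ, add_assoc, h1]
    · rintro _ ⟨p, ⟨hs, hxy⟩, rfl⟩
      obtain ⟨x', y', h1, h2⟩ := reframe _ _ _ _ _ (he _ hs) (hnb _ hs) (p 1) (p 2)
      refine ⟨(t + p 0, x', y'), ⟨⟨by simpa using by linarith [hs.1], by simpa using hs.2⟩, by simpa [h2] using hxy⟩, ?_⟩
      simp [psi, hΨ, add_assoc, h1]
  · intro p hp q hq h
    obtain ⟨x, y, h1, h2⟩ := reframe _ _ _ _ _ (he _ hp.1) (hnb _ hp.1) (p 1) (p 2)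
    obtain ⟨x', y', h1', h2'⟩ := reframe _ _ _ _ _ (he _ hq.1) (hnb _ hq.1) (q 1) (q 2)
    have hE : Ψ (t + p 0, x, y) = Ψ (t + q 0, x', y') := by
      rw [hΨ, hΨ]
      simp only [add_assoc, ← h1, ← h1']
      simpa [psi, add_assoc] using h
    have := hinj ⟨hr _ hp.1, by simp only [h2]; linarith [hp.2]⟩ ⟨hr _ hq.1, by simp only [h2']; linarith [hq.2]⟩ hE
    simp only [Prod.mk.injEq, add_right_inj] at this
    obtain ⟨i1, i2, i3⟩ := this
    rw [← i2, ← i3, ← i1, ← h1] at h1'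
    obtain ⟨j1, j2⟩ := frame_inj _ _ _ (he _ hp.1) _ _ _ _ h1'
    ext i
    fin_cases i
    · exact i1
    · exact j1.symm
    · exact j2.symm

lemma nb_ONF (T A n b : E3) (hT : ‖T‖ = 1) (hA : A ≠ 0) (hTA : inner ℝ A T = (0:ℝ)) (hn : n = ‖A‖⁻¹ • A)
    (hb : b = cross3 T n) : ONF T n b := by
  have hA' : ‖A‖ ≠ 0 := norm_ne_zero_iff.2 hA
  have t1 : inner ℝ T T = (1:ℝ) := by rw [real_inner_self_eq_norm_sq, hT]; norm_num
  have n1 : inner ℝ n n = (1:ℝ) := by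
    rw [hn, inner_smul_left, inner_smul_right, real_inner_self_eq_norm_sq]; simp; field_simp
  have nT : inner ℝ n T = (0:ℝ) := by rw [hn, inner_smul_left, hTA]; simp
  refine ⟨t1, n1, ?_, nT, ?_, ?_⟩
  all_goals
    subst hb
    rw [inner3] at *
    simp [cross3]
  · have : (1:ℝ) = (T 0 * T 0 + T 1 * T 1 + T 2 * T 2) * (n 0 * n 0 + n 1 * n 1 + n 2 * n 2) -
        (n 0 * T 0 + n 1 * T 1 + n 2 * T 2) ^ 2 := by rw [t1, n1, nT]; norm_num
    rw [this]
    ring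
  · ring
  · ring

lemma psi_unflat (g e1 e2 : ℝ → E3) (k1 k2 : ℝ → ℝ) (σ : ℝ) (q : E3) :
    psi g e1 e2 (unflat k1 k2 σ q) = g (q 0) + q 1 • e1 (q 0) + q 2 • e2 (q 0)
      - unc k1 k2 σ q • (k1 (q 0) • e1 (q 0) + k2 (q 0) • e2 (q 0)) := by
  simp only [psi, unflat]
  simp
  module

lemma den_pos (T A : ℝ → E3) (K : ℝ) (hT : ∀ α, ‖T α‖ = 1) (hTA : ∀ α, HasDerivAt T (A α) α)
    (hA : ∀ s ∈ Icc (-3:ℝ) 3, ‖A s‖ ≤ K) (α : ℝ) (hα : α ∈ Icc (-3:ℝ) 3) (hK : K * |α| ≤ 1) :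
    ‖T α - T 0‖ ≤ K * |α| ∧ 1 ≤ (1 + inner ℝ (T 0) (T α) : ℝ) := by
  have h1 := lip T A K hTA hA 0 α (by norm_num) hα
  rw [sub_zero] at h1
  refine ⟨h1, ?_⟩
  have h2 := norm_sub_sq_real (T α) (T 0)
  rw [hT, hT, real_inner_comm] at h2
  have h3 : ‖T α - T 0‖ ≤ 1 := h1.trans hK
  nlinarith [norm_nonneg (T α - T 0)]

lemma phi_bd (T A : ℝ → E3) (v : E3) (K : ℝ) (hT : ∀ α, ‖T α‖ = 1) (hTA : ∀ α, HasDerivAt T (A α) α)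
    (hA : ∀ s ∈ Icc (-3:ℝ) 3, ‖A s‖ ≤ K) (hv : inner ℝ v (T 0) = (0:ℝ)) (hv1 : inner ℝ v v = (1:ℝ))
    (α : ℝ) (hα : α ∈ Icc (-3:ℝ) 3) (hK : K * |α| ≤ 1) : |phi T v α| ≤ K * |α| := by
  obtain ⟨h1, h2⟩ := den_pos T A K hT hTA hA α hα hK
  have nv : ‖v‖ = 1 := by
    rw [real_inner_self_eq_norm_sq] at hv1
    nlinarith [norm_nonneg v]
  have e : (inner ℝ v (T α) : ℝ) = inner ℝ (T α - T 0) v := by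
    rw [inner_sub_left, real_inner_comm, real_inner_comm v (T 0), hv, sub_zero]
  have h3 := inner_le_u _ v nv _ h1
  rw [← e] at h3
  unfold phi
  rw [abs_div, abs_of_pos (by linarith : (0:ℝ) < 1 + inner ℝ (T 0) (T α))]
  refine (div_le_iff₀ (by linarith)).2 ?_
  have : 0 ≤ K * |α| := (abs_nonneg _).trans h3
  nlinarith

lemma fr_diff_bd (T A : ℝ → E3) (v : E3) (K : ℝ) (hT : ∀ α, ‖T α‖ = 1) (hTA : ∀ α, HasDerivAt T (A α) α)
    (hA : ∀ s ∈ Icc (-3:ℝ) 3, ‖A s‖ ≤ K) (hv : inner ℝ v (T 0) = (0:ℝ)) (hv1 : inner ℝ v v = (1:ℝ))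
    (a b δ : ℝ) (hδ : 0 < δ) (hδ1 : δ ≤ 1) (ha : |a| ≤ δ) (hb : |b| ≤ 2 * δ) (hK0 : 0 ≤ K) (hK : K * (2 * δ) ≤ 1) :
    ‖fr T v b - fr T v a + (2 * (phi T v b - phi T v a)) • T 0‖ ≤ 5 * K ^ 2 * δ ^ 2 ∧
    |phi T v b - phi T v a| ≤ 3 * K * δ := by
  have hab := abs_le.1 ha
  have hbb := abs_le.1 hb
  have ha3 : a ∈ Icc (-3:ℝ) 3 := ⟨by linarith, by linarith⟩
  have hb3 : b ∈ Icc (-3:ℝ) 3 := ⟨by linarith, by linarith⟩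
  have Ka : K * |a| ≤ K * δ := mul_le_mul_of_nonneg_left ha hK0
  have Kb : K * |b| ≤ K * (2 * δ) := mul_le_mul_of_nonneg_left hb hK0
  have hKd : 0 ≤ K * δ := by positivity
  have da := (den_pos T A K hT hTA hA a ha3 (by linarith)).1.trans Ka
  have db := (den_pos T A K hT hTA hA b hb3 (by linarith)).1.trans Kb
  have pa := (phi_bd T A v K hT hTA hA hv hv1 a ha3 (by linarith)).trans Ka
  have pb := (phi_bd T A v K hT hTA hA hv hv1 b hb3 (by linarith)).trans Kb
  constructor
  · have e : fr T v b - fr T v a + (2 * (phi T v b - phi T v a)) • T 0 =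
        phi T v a • (T a - T 0) - phi T v b • (T b - T 0) := by
      unfold fr; module
    rw [e]
    refine (norm_sub_le _ _).trans ?_
    rw [norm_smul, norm_smul, Real.norm_eq_abs, Real.norm_eq_abs]
    have m1 := mul_le_mul pa da (norm_nonneg _) hKd
    have m2 := mul_le_mul pb db (norm_nonneg _) (by linarith : 0 ≤ K * (2 * δ))
    nlinarith
  · refine (abs_sub _ _).trans ?_
    linarith

set_option maxHeartbeats 1000000 in
lemma coupling_bound (γ T A B : ℝ → E3) (v1 v2 : E3) (K δ s y1 y2 c0 c1 : ℝ)
    (hγT : ∀ α, HasDerivAt γ (T α) α)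
    (hTA : ∀ α, HasDerivAt T (A α) α) (hAB : ∀ α, HasDerivAt A (B α) α)
    (hT : ∀ α, ‖T α‖ = 1) (o1 : inner ℝ v1 v1 = (1:ℝ)) (o2 : inner ℝ v2 v2 = (1:ℝ))
    (oT1 : inner ℝ v1 (T 0) = (0:ℝ)) (oT2 : inner ℝ v2 (T 0) = (0:ℝ))
    (hA : ∀ s ∈ Icc (-3:ℝ) 3, ‖A s‖ ≤ K) (hB : ∀ s ∈ Icc (-3:ℝ) 3, ‖B s‖ ≤ K) (hK : 1 ≤ K)
    (hδ : 0 < δ) (hKδ : K * δ ≤ 1 / 64) (hs : |s| ≤ δ / 4) (hy1 : |y1| ≤ δ / 4) (hy2 : |y2| ≤ δ / 4)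
    (hc0 : |c0| ≤ δ ^ 2) (hc : |c1 - c0| ≤ K * δ ^ 3) (u : E3) (hu : u = ‖γ δ - γ 0‖⁻¹ • (γ δ - γ 0)) (D : E3)
    (hD : D = (γ (δ + -s) + y1 • fr T v1 (δ + -s) + y2 • fr T v2 (δ + -s) - c1 • A (δ + -s)) -
      (γ (0 + s) + y1 • fr T v1 (0 + s) + y2 • fr T v2 (0 + s) - c0 • A (0 + s))) :
    ‖D‖ ≤ inner ℝ D u + 3200 * K ^ 4 * δ ^ 5 := by
  have hδ1 : δ ≤ 1 / 64 := by nlinarith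
  have hs' := abs_le.1 hs
  have hK0 : 0 ≤ K := by linarith
  rw [zero_add] at hD
  set b := δ + -s with hb
  set w := γ δ - γ 0 with hw
  -- chord
  have cw := tay1 γ T A K hK0 hγT hTA hA 0 (by norm_num) δ (by rw [abs_of_pos hδ]; linarith)
  rw [zero_add, ← hw] at cw
  have nw1 : δ - K * δ ^ 2 ≤ ‖w‖ := by
    have := norm_sub_norm_le (δ • T 0) w
    rw [norm_smul, hT, norm_sub_rev (δ • T 0) w, Real.norm_eq_abs, abs_of_pos hδ] at this
    linarith
  have nw2 : 7 / 8 * δ ≤ ‖w‖ := by nlinarith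
  have wpos : 0 < ‖w‖ := by linarith
  have nu : ‖u‖ = 1 := by
    rw [hu, norm_smul, norm_inv, norm_norm, inv_mul_cancel₀ wpos.ne']
  have wu : w = ‖w‖ • u := by
    rw [hu, smul_smul, mul_inv_cancel₀ wpos.ne', one_smul]
  -- part 1
  have hmid : δ / 2 ∈ Icc (-1:ℝ) 2 := ⟨by linarith, by linarith⟩
  have P1 := tayA3 γ T A B K hK0 hγT hTA hAB hB (δ / 2) hmid (δ / 2 - s) (by rw [abs_le]; constructor <;> linarith)
  have P2 := tayA3 γ T A B K hK0 hγT hTA hAB hB (δ / 2) hmid (δ / 2) (by rw [abs_le]; constructor <;> linarith)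
  rw [show δ / 2 + (δ / 2 - s) = b by rw [hb]; ring, show δ / 2 - (δ / 2 - s) = s by ring,
    abs_of_pos (by linarith : 0 < δ / 2 - s)] at P1
  rw [show δ / 2 + δ / 2 = δ by ring, sub_self, abs_of_pos (by linarith : 0 < δ / 2), ← hw] at P2
  set l := 2 * (δ / 2 - s) / δ with hl
  have l1 : 1 / 2 ≤ l := by rw [hl, le_div_iff₀ hδ]; linarith
  have l2 : l ≤ 3 / 2 := by rw [hl, div_le_iff₀ hδ]; linarith
  have hlδ : l * δ = 2 * (δ / 2 - s) := by rw [hl]; field_simp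
  have Q1 : ‖(γ b - γ s) - l • w‖ ≤ 3 * K * δ ^ 3 := by
    have e : (γ b - γ s) - l • w = (γ b - γ s - (2 * (δ / 2 - s)) • T (δ / 2)) - l • (w - (2 * (δ / 2)) • T (δ / 2)) := by
      rw [← hlδ, show 2 * (δ / 2) = δ by ring]; module
    rw [e]
    refine (norm_sub_le _ _).trans ?_
    rw [norm_smul, Real.norm_eq_abs, abs_of_pos (by linarith)]
    have m1 : (δ / 2 - s) ^ 3 ≤ δ ^ 3 := pow_le_pow_left₀ (by linarith) (by linarith) 3
    have m2 : l * ‖w - (2 * (δ / 2)) • T (δ / 2)‖ ≤ 3 / 2 * (2 * K * (δ / 2) ^ 3) :=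
      mul_le_mul l2 P2 (norm_nonneg _) (by norm_num)
    have m3 : K * (δ / 2 - s) ^ 3 ≤ K * δ ^ 3 := mul_le_mul_of_nonneg_left m1 hK0
    have m4 : 0 ≤ K * δ ^ 3 := by positivity
    linarith
  -- part 2
  have hs1 : |s| ≤ δ := by linarith
  have hb1 : |b| ≤ 2 * δ := by rw [abs_le]; constructor <;> linarith
  have F : ∀ v : E3, inner ℝ v (T 0) = (0:ℝ) → inner ℝ v v = (1:ℝ) → ∀ y : ℝ, |y| ≤ δ / 4 →
      ∃ m : ℝ, |m| ≤ 3 / 2 * (K * δ) ∧ ‖y • (fr T v b - fr T v s) - m • w‖ ≤ 4 * K ^ 2 * δ ^ 3 := by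
    intro v hv hv1 y hy
    obtain ⟨a1, a2⟩ := fr_diff_bd T A v K hT hTA hA hv hv1 s b δ hδ (by linarith) hs1 hb1 hK0 (by linarith)
    set Δ := phi T v b - phi T v s
    have hm : |- (2 * Δ * y / δ)| ≤ 3 / 2 * (K * δ) := by
      rw [abs_neg, abs_div, abs_of_pos hδ, div_le_iff₀ hδ, abs_mul, abs_mul, abs_two]
      have := mul_le_mul a2 hy (abs_nonneg _) (by positivity)
      linarith
    refine ⟨-(2 * Δ * y / δ), hm, ?_⟩
    have e : y • (fr T v b - fr T v s) - (-(2 * Δ * y / δ)) • w =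
      y • (fr T v b - fr T v s + (2 * Δ) • T 0) - (-(2 * Δ * y / δ)) • (w - δ • T 0) := by
      have : 2 * Δ * y / δ * δ = 2 * Δ * y := by field_simp
      have e2 : (2 * Δ * y / δ) • (w - δ • T 0) = (2 * Δ * y / δ) • w - (2 * Δ * y) • T 0 := by
        rw [smul_sub, smul_smul, this]
      rw [neg_smul, neg_smul, e2]
      module
    rw [e]
    refine (norm_sub_le _ _).trans ?_
    have cw' : ‖w - δ • T 0‖ ≤ K * δ ^ 2 := cw
    rw [norm_smul, norm_smul, Real.norm_eq_abs, Real.norm_eq_abs]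
    have m1 := mul_le_mul hy a1 (norm_nonneg _) (by positivity)
    have m2 := mul_le_mul hm cw' (norm_nonneg _) (by positivity)
    have : 0 ≤ K ^ 2 * δ ^ 3 := by positivity
    linarith
  obtain ⟨m1, hm1, hq1⟩ := F v1 oT1 o1 y1 hy1
  obtain ⟨m2, hm2, hq2⟩ := F v2 oT2 o2 y2 hy2
  -- part 3
  have hb3 : b ∈ Icc (-3:ℝ) 3 := by rw [abs_le] at hb1; exact ⟨by linarith, by linarith⟩
  have hs3 : s ∈ Icc (-3:ℝ) 3 := ⟨by linarith, by linarith⟩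
  have Q3 : ‖c1 • A b - c0 • A s‖ ≤ 3 * K ^ 2 * δ ^ 3 := by
    have e : c1 • A b - c0 • A s = (c1 - c0) • A b + c0 • (A b - A s) := by module
    rw [e]
    refine (norm_add_le _ _).trans ?_
    rw [norm_smul, norm_smul, Real.norm_eq_abs, Real.norm_eq_abs]
    have h1 := mul_le_mul hc (hA b hb3) (norm_nonneg _) (by positivity)
    have h2 : ‖A b - A s‖ ≤ K * (2 * δ) := (lip A B K hAB hB s b hs3 hb3).trans (by
      apply mul_le_mul_of_nonneg_left _ hK0
      rw [abs_le]; constructor <;> linarith)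
    have h3 := mul_le_mul hc0 h2 (norm_nonneg _) (by positivity)
    have : K * δ ^ 3 ≤ K ^ 2 * δ ^ 3 := by
      apply mul_le_mul_of_nonneg_right _ (by positivity); nlinarith
    linarith
  have hq : ‖D - (l + m1 + m2) • w‖ ≤ 20 * K ^ 2 * δ ^ 3 := by
    have e : D - (l + m1 + m2) • w = ((γ b - γ s) - l • w) + (y1 • (fr T v1 b - fr T v1 s) - m1 • w)
      + (y2 • (fr T v2 b - fr T v2 s) - m2 • w) - (c1 • A b - c0 • A s) := by
      rw [hD]; module
    rw [e]
    have h1 := norm_sub_le (((γ b - γ s) - l • w) + (y1 • (fr T v1 b - fr T v1 s) - m1 • w)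
      + (y2 • (fr T v2 b - fr T v2 s) - m2 • w)) (c1 • A b - c0 • A s)
    have h2 := norm_add₃_le (a := (γ b - γ s) - l • w) (b := y1 • (fr T v1 b - fr T v1 s) - m1 • w)
      (c := y2 • (fr T v2 b - fr T v2 s) - m2 • w)
    have : K * δ ^ 3 ≤ K ^ 2 * δ ^ 3 := by
      apply mul_le_mul_of_nonneg_right _ (by positivity); nlinarith
    have : 0 ≤ K ^ 2 * δ ^ 3 := by positivity
    linarith
  set L := l + m1 + m2
  have hL : 1 / 4 ≤ L := by
    have := (abs_le.1 hm1).1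
    have := (abs_le.1 hm2).1
    simp only [L]; linarith
  have hq' : ‖D - (L * ‖w‖) • u‖ ≤ 20 * K ^ 2 * δ ^ 3 := by
    rw [mul_smul, ← wu]; exact hq
  have hin : δ / 8 ≤ inner ℝ D u := by
    have h1 := inner_le_u _ u nu _ hq'
    rw [inner_sub_left, inner_smul_left, real_inner_self_eq_norm_sq, nu] at h1
    simp at h1
    have h2 := (abs_le.1 h1).1
    have h3 : 1 / 4 * (7 / 8 * δ) ≤ L * ‖w‖ := mul_le_mul hL nw2 (by positivity) (by linarith)
    have h4 : K ^ 2 * δ ^ 3 ≤ (1 / 64) ^ 2 * δ := by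
      have : (K * δ) ^ 2 ≤ (1 / 64) ^ 2 := pow_le_pow_left₀ (by positivity) hKδ 2
      nlinarith
    linarith
  refine (norm_le_par u D nu _ (δ / 8) _ (by linarith) hin hq').trans (le_of_eq ?_)
  field_simp
  ring

structure Crv (γ T A B Q : ℝ → EuclideanSpace ℝ (Fin 3)) (v1 v2 : EuclideanSpace ℝ (Fin 3)) (K : ℝ) : Prop where
  hγT : ∀ α, HasDerivAt γ (T α) α
  hTA : ∀ α, HasDerivAt T (A α) α
  hAB : ∀ α, HasDerivAt A (B α) α
  hBQ : ∀ α, HasDerivAt B (Q α) α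
  hT : ∀ α, ‖T α‖ = 1
  o1 : inner ℝ v1 v1 = (1:ℝ)
  o2 : inner ℝ v2 v2 = (1:ℝ)
  o12 : inner ℝ v1 v2 = (0:ℝ)
  oT1 : inner ℝ v1 (T 0) = (0:ℝ)
  oT2 : inner ℝ v2 (T 0) = (0:ℝ)
  bg : ∀ s ∈ Icc (-3:ℝ) 3, ‖γ s‖ ≤ K
  bA : ∀ s ∈ Icc (-3:ℝ) 3, ‖A s‖ ≤ K
  bB : ∀ s ∈ Icc (-3:ℝ) 3, ‖B s‖ ≤ K
  bQ : ∀ s ∈ Icc (-3:ℝ) 3, ‖Q s‖ ≤ K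
  hK : 1 ≤ K

lemma A_perp (T A : ℝ → E3) (hTA : ∀ α, HasDerivAt T (A α) α) (hT : ∀ α, ‖T α‖ = 1) (α : ℝ) :
    inner ℝ (A α) (T α) = (0:ℝ) := by
  have h1 := (hTA α).inner ℝ (hTA α)
  have : (fun s => (inner ℝ (T s) (T s) : ℝ)) = fun _ => 1 := by
    funext s; rw [real_inner_self_eq_norm_sq, hT]; norm_num
  rw [this] at h1
  have := h1.unique (hasDerivAt_const α 1)
  rw [real_inner_comm (A α) (T α)] at this
  linarith

noncomputable def kk (T A : ℝ → EuclideanSpace ℝ (Fin 3)) (v : EuclideanSpace ℝ (Fin 3)) (t s : ℝ) : ℝ :=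
  inner ℝ (A (t + s)) (fr T v (t + s))

noncomputable def PS (γ T : ℝ → EuclideanSpace ℝ (Fin 3)) (v1 v2 : EuclideanSpace ℝ (Fin 3)) (t : ℝ) :
    EuclideanSpace ℝ (Fin 3) → EuclideanSpace ℝ (Fin 3) :=
  psi (fun s => γ (t + s)) (fun s => fr T v1 (t + s)) (fun s => fr T v2 (t + s))

noncomputable def UF (T A : ℝ → EuclideanSpace ℝ (Fin 3)) (v1 v2 : EuclideanSpace ℝ (Fin 3)) (t σ : ℝ) :
    EuclideanSpace ℝ (Fin 3) → EuclideanSpace ℝ (Fin 3) := unflat (kk T A v1 t) (kk T A v2 t) σ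

section
variable {γ T A B Q : ℝ → E3} {v1 v2 : E3} {K : ℝ}

lemma Crv.dom (C : Crv γ T A B Q v1 v2 K) (α : ℝ) (h : K * |α| ≤ 1) : α ∈ Icc (-3:ℝ) 3 := by
  have hK := C.hK
  have : |α| ≤ 1 := by nlinarith [abs_nonneg α]
  rw [abs_le] at this
  exact ⟨by linarith, by linarith⟩

lemma Crv.den (C : Crv γ T A B Q v1 v2 K) (α : ℝ) (h : K * |α| ≤ 1) : 0 < (1 + inner ℝ (T 0) (T α) : ℝ) :=
  lt_of_lt_of_le one_pos (den_pos T A K C.hT C.hTA C.bA α (C.dom α h) h).2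

lemma Crv.onf (C : Crv γ T A B Q v1 v2 K) (α : ℝ) (h : K * |α| ≤ 1) : ONF (T α) (fr T v1 α) (fr T v2 α) := by
  have hd := C.den α h
  refine ⟨?_, ?_, ?_, ?_, ?_, ?_⟩
  · rw [real_inner_self_eq_norm_sq, C.hT]; norm_num
  · exact (fr_fr T v1 v1 _ C.hT hd C.oT1 C.oT1).trans C.o1
  · exact (fr_fr T v2 v2 _ C.hT hd C.oT2 C.oT2).trans C.o2
  · exact fr_T T v1 _ C.hT hd
  · exact fr_T T v2 _ C.hT hd
  · exact (fr_fr T v1 v2 _ C.hT hd C.oT1 C.oT2).trans C.o12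

lemma Crv.curv (C : Crv γ T A B Q v1 v2 K) (t s : ℝ) (h : K * |t + s| ≤ 1) :
    kk T A v1 t s • fr T v1 (t + s) + kk T A v2 t s • fr T v2 (t + s) = A (t + s) ∧
    kk T A v1 t s ^ 2 + kk T A v2 t s ^ 2 ≤ K ^ 2 ∧ |kk T A v1 t s| ≤ K ∧ |kk T A v2 t s| ≤ K := by
  obtain ⟨a1, a2, a3, a4, a5, a6⟩ := C.onf _ h
  have p := A_perp T A C.hTA C.hT (t + s)
  have e := frame_expand _ _ _ a1 a2 a3 a4 a5 a6 (A (t + s))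
  have e2 := frame_parseval _ _ _ a1 a2 a3 a4 a5 a6 (A (t + s)) (A (t + s))
  rw [p, zero_smul, zero_add] at e
  rw [p, real_inner_self_eq_norm_sq] at e2
  have hA := C.bA _ (C.dom _ h)
  have hs : kk T A v1 t s ^ 2 + kk T A v2 t s ^ 2 ≤ K ^ 2 := by
    have : ‖A (t + s)‖ ^ 2 ≤ K ^ 2 := pow_le_pow_left₀ (norm_nonneg _) hA 2
    unfold kk
    linarith
  have hK := C.hK
  refine ⟨e.symm, hs, abs_le_of_sq_le_sq (by nlinarith [sq_nonneg (kk T A v2 t s)]) (by linarith),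
    abs_le_of_sq_le_sq (by nlinarith [sq_nonneg (kk T A v1 t s)]) (by linarith)⟩

lemma Crv.meas (C : Crv γ T A B Q v1 v2 K) (t : ℝ) :
    Measurable (fun s => γ (t + s)) ∧ Measurable (fun s => fr T v1 (t + s)) ∧ Measurable (fun s => fr T v2 (t + s)) ∧
    Measurable (kk T A v1 t) ∧ Measurable (kk T A v2 t) := by
  have cγ : Continuous γ := continuous_iff_continuousAt.2 fun x => (C.hγT x).continuousAt
  have cT : Continuous T := continuous_iff_continuousAt.2 fun x => (C.hTA x).continuousAt
  have cA : Continuous A := continuous_iff_continuousAt.2 fun x => (C.hAB x).continuousAt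
  have mt : Measurable (fun s : ℝ => t + s) := by fun_prop
  have mA : Measurable (fun s => A (t + s)) := cA.measurable.comp mt
  have m1 : Measurable (fun s => fr T v1 (t + s)) := (fr_meas T v1 cT).comp mt
  have m2 : Measurable (fun s => fr T v2 (t + s)) := (fr_meas T v2 cT).comp mt
  exact ⟨cγ.measurable.comp mt, m1, m2, mA.inner m1, mA.inner m2⟩

/-- per-`t` facts -/
lemma Crv.tube (C : Crv γ T A B Q v1 v2 K) (t σ ε : ℝ) (hε : ∀ s ∈ Ioo (-ε) ε, K * |t + s| ≤ 1)
    (hσ : K * σ < 1) (hσ0 : 0 < σ)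
    (hinj : InjOn (PS γ T v1 v2 t) (cyl σ ε)) :
    normRestrict (PS γ T v1 v2 t '' cyl σ ε) =
        (normRestrict (cyl σ ε)).map (PS γ T v1 v2 t ∘ UF T A v1 v2 t σ) ∧
    normRestrict (PS γ T v1 v2 t '' cyl σ ε) =
        ((volume (cyl σ ε))⁻¹ • mm (kk T A v1 t) (kk T A v2 t) σ ε).map (PS γ T v1 v2 t) ∧
    ∀ s ∈ Ioo (-ε) ε, (kk T A v1 t s ^ 2 + kk T A v2 t s ^ 2) * σ ^ 2 < 1 := by
  have hk : ∀ s ∈ Ioo (-ε) ε, (kk T A v1 t s ^ 2 + kk T A v2 t s ^ 2) * σ ^ 2 < 1 := by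
    intro s hs
    have h1 := (C.curv t s (hε s hs)).2.1
    have hK := C.hK
    have h2 : (kk T A v1 t s ^ 2 + kk T A v2 t s ^ 2) * σ ^ 2 ≤ K ^ 2 * σ ^ 2 :=
      mul_le_mul_of_nonneg_right h1 (sq_nonneg _)
    have h3 : 0 < K * σ := by positivity
    nlinarith
  have := tube_t γ T A B v1 v2 t σ ε C.hγT C.hTA C.hAB C.hT C.o1 C.o2 C.o12 C.oT1 C.oT2
    (fun s hs => C.den _ (hε s hs)) hk hinj
  exact ⟨this.1, this.2, hk⟩

lemma onf_norm {T f1 f2 : E3} (h : ONF T f1 f2) : ‖f1‖ = 1 ∧ ‖f2‖ = 1 := by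
  obtain ⟨_, a2, a3, _⟩ := h
  rw [real_inner_self_eq_norm_sq] at a2 a3
  constructor
  · nlinarith [norm_nonneg f1]
  · nlinarith [norm_nonneg f2]

lemma Crv.PS_bd (C : Crv γ T A B Q v1 v2 K) (t σ ε : ℝ) (hε : ∀ s ∈ Ioo (-ε) ε, K * |t + s| ≤ 1)
    (hσ0 : 0 < σ) (hσ : σ ≤ 1) (p : E3) (hp : p ∈ cyl σ ε) : ‖PS γ T v1 v2 t p‖ ≤ K + 2 := by
  have h := hε _ hp.1
  obtain ⟨n1, n2⟩ := onf_norm (C.onf _ h)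
  have hg := C.bg _ (C.dom _ h)
  have q := sq_le_of_cyl σ ε p hp
  have q1 : |p 1| ≤ 1 := (abs_le_of_sq_le_sq q.2.1 hσ0.le).trans hσ
  have q2 : |p 2| ≤ 1 := (abs_le_of_sq_le_sq q.2.2 hσ0.le).trans hσ
  unfold PS psi
  refine norm_add₃_le.trans ?_
  rw [norm_smul, norm_smul, n1, n2, Real.norm_eq_abs, Real.norm_eq_abs]
  linarith

lemma Crv.mean (C : Crv γ T A B Q v1 v2 K) (t σ ε : ℝ) (hε : ∀ s ∈ Ioo (-ε) ε, K * |t + s| ≤ 1)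
    (ht : t ∈ Icc (-1:ℝ) 2) (hε0 : 0 < ε) (hε1 : ε ≤ 1)
    (hσ : K * σ < 1) (hσ0 : 0 < σ)
    (hinj : InjOn (PS γ T v1 v2 t) (cyl σ ε)) (u : E3) (hu : ‖u‖ = 1) :
    |∫ z, (inner ℝ z u : ℝ) ∂(normRestrict (PS γ T v1 v2 t '' cyl σ ε)) -
      (inner ℝ (γ t) u + (ε ^ 2 / 6 - σ ^ 2 / 4) * (inner ℝ (A t) u))| ≤ K * (ε ^ 4 + σ ^ 2 * ε ^ 2) := by
  obtain ⟨_, h2, hk⟩ := C.tube t σ ε hε hσ hσ0 hinj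
  obtain ⟨m1, m2, m3, m4, m5⟩ := C.meas t
  have mu : Measurable (fun z : E3 => (inner ℝ z u : ℝ)) := by fun_prop
  have mP : Measurable (PS γ T v1 v2 t) := psi_meas _ _ _ m1 m2 m3
  have hK := C.hK
  have hσ1 : σ ≤ 1 := by nlinarith
  rw [h2, integral_map mP.aemeasurable mu.aestronglyMeasurable, mm_int _ _ _ _ m4 m5 hk]
  refine mean_val σ ε hσ0 hε0 _ _ _ (fun s => A (t + s)) _ _ u (γ t) (A t) hu K ((K + 2) * 3) (by linarith) m1 m2 m3 m4 m5 ?_ ?_ ?_ ?_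
  · intro p hp
    rw [abs_mul]
    have c := C.curv t (p 0) (hε _ hp.1)
    have q := sq_le_of_cyl σ ε p hp
    have q1 : |p 1| ≤ σ := (abs_le_of_sq_le_sq q.2.1 hσ0.le)
    have q2 : |p 2| ≤ σ := (abs_le_of_sq_le_sq q.2.2 hσ0.le)
    apply mul_le_mul (inner_le_u _ u hu _ (C.PS_bd t σ ε hε hσ0 hσ1 p hp)) _ (abs_nonneg _) (by linarith)
    have r1 := mul_le_mul c.2.2.1 q1 (abs_nonneg _) (by linarith)
    have r2 := mul_le_mul c.2.2.2 q2 (abs_nonneg _) (by linarith)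
    rw [← abs_mul] at r1 r2
    rw [abs_le] at r1 r2 ⊢
    constructor <;> linarith [r1.1, r1.2, r2.1, r2.2]
  · intro s hs; exact (C.curv t s (hε s hs)).1
  · intro s hs
    have hs1 : |s| ≤ 1 := by rw [abs_le]; constructor <;> linarith [hs.1, hs.2]
    exact tayS4 γ T A B Q K (by linarith) C.hγT C.hTA C.hAB C.hBQ C.bQ t ht s hs1
  · intro s hs
    have hs1 : |s| ≤ 1 := by rw [abs_le]; constructor <;> linarith [hs.1, hs.2]
    exact tayS2 A B Q K (by linarith) C.hAB C.hBQ C.bQ t ht s hs1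
end

lemma unc_close (x1 x2 y1 y2 a1 a2 b1 b2 q1 q2 c d σ K : ℝ) (hσ : 0 < σ) (hK : 0 ≤ K)
    (hx : x1 ^ 2 + x2 ^ 2 < σ ^ 2) (hy : y1 ^ 2 + y2 ^ 2 < σ ^ 2)
    (hc : c = (σ ^ 2 - x1 ^ 2 - x2 ^ 2) / 2) (hd : d = (σ ^ 2 - y1 ^ 2 - y2 ^ 2) / 2)
    (ex1 : x1 = q1 - c * a1) (ex2 : x2 = q2 - c * a2) (ey1 : y1 = q1 - d * b1) (ey2 : y2 = q2 - d * b2)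
    (ha1 : |a1| ≤ K) (ha2 : |a2| ≤ K) (hb1 : |b1| ≤ K) (hb2 : |b2| ≤ K) :
    |c - d| ≤ 2 * K * σ ^ 3 ∧ |d| ≤ σ ^ 2 := by
  have c0 : |c| ≤ σ ^ 2 / 2 := by rw [abs_le]; constructor <;> nlinarith [sq_nonneg x1, sq_nonneg x2]
  have d0 : |d| ≤ σ ^ 2 / 2 := by rw [abs_le]; constructor <;> nlinarith [sq_nonneg y1, sq_nonneg y2]
  have X1 : |x1| ≤ σ := abs_le_of_sq_le_sq (by nlinarith [sq_nonneg x2]) hσ.le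
  have X2 : |x2| ≤ σ := abs_le_of_sq_le_sq (by nlinarith [sq_nonneg x1]) hσ.le
  have Y1 : |y1| ≤ σ := abs_le_of_sq_le_sq (by nlinarith [sq_nonneg y2]) hσ.le
  have Y2 : |y2| ≤ σ := abs_le_of_sq_le_sq (by nlinarith [sq_nonneg y1]) hσ.le
  have key : ∀ x y a b q : ℝ, x = q - c * a → y = q - d * b → |a| ≤ K → |b| ≤ K → |x| ≤ σ → |y| ≤ σ →
      |y ^ 2 - x ^ 2| ≤ 2 * K * σ ^ 3 := by
    intro x y a b q hx hy ha hb hX hY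
    have e : y ^ 2 - x ^ 2 = (c * a - d * b) * (y + x) := by rw [hx, hy]; ring
    rw [e, abs_mul]
    have h1 : |c * a - d * b| ≤ K * σ ^ 2 := by
      refine (abs_sub _ _).trans ?_
      rw [abs_mul, abs_mul]
      have := mul_le_mul c0 ha (abs_nonneg _) (by positivity)
      have := mul_le_mul d0 hb (abs_nonneg _) (by positivity)
      linarith
    have h2 : |y + x| ≤ 2 * σ := (abs_add_le _ _).trans (by linarith)
    have := mul_le_mul h1 h2 (abs_nonneg _) (by positivity)
    linarith
  have k1 := key x1 y1 a1 b1 q1 ex1 ey1 ha1 hb1 X1 Y1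
  have k2 := key x2 y2 a2 b2 q2 ex2 ey2 ha2 hb2 X2 Y2
  have e : c - d = (y1 ^ 2 - x1 ^ 2) / 2 + (y2 ^ 2 - x2 ^ 2) / 2 := by
    clear key ex1 ex2 ey1 ey2 c0 d0
    rw [hc, hd]; ring
  refine ⟨?_, by nlinarith [sq_nonneg σ]⟩
  rw [e]
  rw [abs_le] at k1 k2 ⊢
  constructor <;> linarith [k1.1, k1.2, k2.1, k2.2]

lemma final_arith (W M M1 M0 Dd δ σ ε K g0 g1 a0 a1 k w : ℝ) (hK : 1 ≤ K) (hδ : 0 < δ) (hδ1 : δ ≤ 1 / 64)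
    (hσ0 : 0 < σ) (hσ : σ ≤ δ / 4) (hε0 : 0 < ε) (hε : ε ≤ δ / 4)
    (mean0 : |M0 - (g0 + (ε ^ 2 / 6 - σ ^ 2 / 4) * a0)| ≤ K * (ε ^ 4 + σ ^ 2 * ε ^ 2))
    (mean1 : |M1 - (g1 + (ε ^ 2 / 6 - σ ^ 2 / 4) * a1)| ≤ K * (ε ^ 4 + σ ^ 2 * ε ^ 2))
    (hcur : |a1 - a0 + k ^ 2 * w| ≤ 4 * K ^ 3 * δ ^ 2) (Md : M = M1 - M0) (lower : M ≤ W) (upper : W ≤ Dd)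
    (up2 : Dd ≤ M + 3200 * K ^ 4 * δ ^ 5) (hM : g1 - g0 = w) :
    |W - w * (1 + σ ^ 2 * k ^ 2 / 4 - ε ^ 2 * k ^ 2 / 6)| ≤ 4000 * K ^ 4 * δ ^ 4 := by
  have hK0 : 0 ≤ K := by linarith
  have hs2 : σ ^ 2 ≤ δ ^ 2 / 16 := by nlinarith
  have he2 : ε ^ 2 ≤ δ ^ 2 / 16 := by nlinarith
  have he4 : ε ^ 4 + σ ^ 2 * ε ^ 2 ≤ δ ^ 4 / 2 := by
    have a := mul_le_mul hs2 he2 (sq_nonneg _) (by positivity)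
    have b := mul_le_mul he2 he2 (sq_nonneg _) (by positivity)
    have : 0 ≤ δ ^ 4 := by positivity
    nlinarith
  have t1 : |ε ^ 2 / 6 - σ ^ 2 / 4| ≤ δ ^ 2 := by
    rw [abs_le]; constructor <;> linarith [sq_nonneg σ, sq_nonneg ε]
  have t2 := mul_le_mul t1 hcur (abs_nonneg _) (by positivity)
  rw [← abs_mul] at t2
  have t3 := mul_le_mul_of_nonneg_left he4 hK0
  have hd4 : (0:ℝ) ≤ δ ^ 4 := by positivity
  have z1 : K * δ ^ 4 ≤ K ^ 4 * δ ^ 4 := mul_le_mul_of_nonneg_right (by simpa using pow_le_pow_right₀ hK (show 1 ≤ 4 by norm_num)) hd4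
  have z3 : K ^ 3 * δ ^ 4 ≤ K ^ 4 * δ ^ 4 := mul_le_mul_of_nonneg_right (pow_le_pow_right₀ hK (show 3 ≤ 4 by norm_num)) hd4
  have z5 : 3200 * K ^ 4 * δ ^ 5 ≤ 3200 * (K ^ 4 * δ ^ 4) := by
    have : δ ^ 5 ≤ δ ^ 4 := pow_le_pow_of_le_one hδ.le (by linarith) (by norm_num)
    have := mul_le_mul_of_nonneg_left this (show 0 ≤ 3200 * K ^ 4 by positivity)
    linarith
  have zz : 0 ≤ K ^ 4 * δ ^ 4 := by positivity
  rw [abs_le] at mean0 mean1 t2 ⊢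
  obtain ⟨x1, x2⟩ := mean0
  obtain ⟨x3, x4⟩ := mean1
  obtain ⟨x5, x6⟩ := t2
  have e : (ε ^ 2 / 6 - σ ^ 2 / 4) * (a1 - a0 + k ^ 2 * w) = (ε ^ 2 / 6 - σ ^ 2 / 4) * a1 - (ε ^ 2 / 6 - σ ^ 2 / 4) * a0
      - w * (σ ^ 2 * k ^ 2 / 4 - ε ^ 2 * k ^ 2 / 6) := by ring
  rw [e] at x5 x6
  rw [show w * (1 + σ ^ 2 * k ^ 2 / 4 - ε ^ 2 * k ^ 2 / 6) = w + w * (σ ^ 2 * k ^ 2 / 4 - ε ^ 2 * k ^ 2 / 6) by ring]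
  rw [show δ ^ 2 * (4 * K ^ 3 * δ ^ 2) = 4 * (K ^ 3 * δ ^ 4) by ring] at x5 x6
  constructor <;> linarith

section
variable {γ T A B Q : ℝ → E3} {v1 v2 : E3} {K : ℝ}

lemma Crv.B_T (C : Crv γ T A B Q v1 v2 K) (α : ℝ) : inner ℝ (B α) (T α) = -(‖A α‖ ^ 2) := by
  have h1 := (C.hAB α).inner ℝ (C.hTA α)
  have : (fun s => (inner ℝ (A s) (T s) : ℝ)) = fun _ => 0 := by
    funext s; exact A_perp T A C.hTA C.hT s
  rw [this] at h1
  have := h1.unique (hasDerivAt_const α 0)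
  rw [real_inner_self_eq_norm_sq] at this
  linarith

lemma Crv.chord (C : Crv γ T A B Q v1 v2 K) (δ : ℝ) (hδ : 0 < δ) (hKδ : K * δ ≤ 1 / 64) (w u : E3)
    (hw : w = γ δ - γ 0) (hu : u = ‖w‖⁻¹ • w) :
    0 < ‖w‖ ∧ ‖u‖ = 1 ∧ inner ℝ w u = ‖w‖ ∧
    |inner ℝ (A δ) u - inner ℝ (A 0) u + ‖A 0‖ ^ 2 * ‖w‖| ≤ 4 * K ^ 3 * δ ^ 2 := by
  have hK := C.hK
  have hK0 : 0 ≤ K := by linarith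
  have hδ1 : δ ≤ 1 / 64 := by nlinarith
  have ad : |δ| ≤ 1 := by rw [abs_of_pos hδ]; linarith
  have cw := tay1 γ T A K hK0 C.hγT C.hTA C.bA 0 (by norm_num) δ ad
  have cA := tay1 A B Q K hK0 C.hAB C.hBQ C.bQ 0 (by norm_num) δ ad
  rw [zero_add] at cw cA
  rw [← hw] at cw
  have nw1 : δ - K * δ ^ 2 ≤ ‖w‖ := by
    have := norm_sub_norm_le (δ • T 0) w
    rw [norm_smul, C.hT, norm_sub_rev (δ • T 0) w, Real.norm_eq_abs, abs_of_pos hδ] at this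
    linarith
  have nw2 : ‖w‖ ≤ δ + K * δ ^ 2 := by
    have := norm_sub_norm_le w (δ • T 0)
    rw [norm_smul, C.hT, Real.norm_eq_abs, abs_of_pos hδ] at this
    linarith
  have w0 : 0 < ‖w‖ := by nlinarith
  have nu : ‖u‖ = 1 := by
    rw [hu, norm_smul, norm_inv, norm_norm, inv_mul_cancel₀ w0.ne']
  have wu : w = ‖w‖ • u := by rw [hu, smul_smul, mul_inv_cancel₀ w0.ne', one_smul]
  have iwu : inner ℝ w u = ‖w‖ := by
    rw [hu, inner_smul_right, real_inner_self_eq_norm_sq]; field_simp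
  have hA := C.bA 0 (by norm_num)
  have hB := C.bB 0 (by norm_num)
  refine ⟨w0, nu, iwu, ?_⟩
  have h1 : |(inner ℝ (A δ - A 0 - δ • B 0) u : ℝ)| ≤ K * δ ^ 2 := inner_le_u _ u nu _ cA
  have ed : δ • u - δ • T 0 = (δ - ‖w‖) • u + (w - δ • T 0) := by
    rw [sub_smul, ← wu]; abel
  have ab : |δ - ‖w‖| ≤ K * δ ^ 2 := by rw [abs_le]; constructor <;> linarith
  have h2 : ‖δ • u - δ • T 0‖ ≤ 2 * K * δ ^ 2 := by
    rw [ed]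
    refine (norm_add_le _ _).trans ?_
    rw [norm_smul, nu, Real.norm_eq_abs]
    linarith
  have h3 : |(inner ℝ (B 0) (δ • u - δ • T 0) : ℝ)| ≤ K * (2 * K * δ ^ 2) :=
    (abs_real_inner_le_norm _ _).trans (mul_le_mul hB h2 (norm_nonneg _) hK0)
  have h4 : |‖A 0‖ ^ 2 * (‖w‖ - δ)| ≤ K ^ 2 * (K * δ ^ 2) := by
    rw [abs_mul, abs_of_nonneg (sq_nonneg _), abs_sub_comm]
    exact mul_le_mul (pow_le_pow_left₀ (norm_nonneg _) hA 2) ab (abs_nonneg _) (by positivity)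
  have e : inner ℝ (A δ) u - inner ℝ (A 0) u + ‖A 0‖ ^ 2 * ‖w‖ =
      inner ℝ (A δ - A 0 - δ • B 0) u + inner ℝ (B 0) (δ • u - δ • T 0) + ‖A 0‖ ^ 2 * (‖w‖ - δ) := by
    simp only [inner_sub_left, inner_sub_right, inner_smul_left, inner_smul_right, C.B_T 0]
    simp
    ring
  rw [e]
  have k1 : K * δ ^ 2 ≤ K ^ 3 * δ ^ 2 :=
    mul_le_mul_of_nonneg_right (by nlinarith [mul_nonneg hK0 hK0]) (sq_nonneg _)
  have k2 : K ^ 2 * δ ^ 2 ≤ K ^ 3 * δ ^ 2 :=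
    mul_le_mul_of_nonneg_right (by nlinarith [mul_nonneg hK0 hK0]) (sq_nonneg _)
  rw [abs_le] at h1 h3 h4 ⊢
  constructor <;> linarith [h1.1, h1.2, h3.1, h3.2, h4.1, h4.2]

lemma Crv.pt (C : Crv γ T A B Q v1 v2 K) (t σ ε : ℝ) (hε : ∀ s ∈ Ioo (-ε) ε, K * |t + s| ≤ 1)
    (hk : ∀ s ∈ Ioo (-ε) ε, (kk T A v1 t s ^ 2 + kk T A v2 t s ^ 2) * σ ^ 2 < 1) (q : E3) (hq : q ∈ cyl σ ε) :
    UF T A v1 v2 t σ q ∈ cyl σ ε ∧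
    PS γ T v1 v2 t (UF T A v1 v2 t σ q) = γ (t + q 0) + q 1 • fr T v1 (t + q 0) + q 2 • fr T v2 (t + q 0)
      - unc (kk T A v1 t) (kk T A v2 t) σ q • A (t + q 0) ∧
    unc (kk T A v1 t) (kk T A v2 t) σ q = (σ ^ 2 - (UF T A v1 v2 t σ q) 1 ^ 2 - (UF T A v1 v2 t σ q) 2 ^ 2) / 2 := by
  have h := unflat_mem (kk T A v1 t) (kk T A v2 t) σ ε q hq (hk _ hq.1)
  refine ⟨h.1, ?_, h.2.2⟩
  unfold PS UF
  rw [psi_unflat, (C.curv t (q 0) (hε _ hq.1)).1]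

lemma UF_1 (t σ : ℝ) (q : E3) : (UF T A v1 v2 t σ q) 1 = q 1 - unc (kk T A v1 t) (kk T A v2 t) σ q * kk T A v1 t (q 0) := rfl
lemma UF_2 (t σ : ℝ) (q : E3) : (UF T A v1 v2 t σ q) 2 = q 2 - unc (kk T A v1 t) (kk T A v2 t) σ q * kk T A v2 t (q 0) := rfl

set_option maxHeartbeats 800000 in
lemma Crv.core (C : Crv γ T A B Q v1 v2 K) (δ σ ε : ℝ) (hδ : 0 < δ) (hKδ : K * δ ≤ 1 / 64)
    (hσ0 : 0 < σ) (hσ : σ ≤ δ / 4) (hε0 : 0 < ε) (hε : ε ≤ δ / 4)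
    (i0 : InjOn (PS γ T v1 v2 0) (cyl σ ε)) (i1 : InjOn (PS γ T v1 v2 δ) (cyl σ ε)) :
    |W1 (normRestrict (PS γ T v1 v2 0 '' cyl σ ε)) (normRestrict (PS γ T v1 v2 δ '' cyl σ ε)) -
      ‖γ 0 - γ δ‖ * (1 + σ ^ 2 * ‖A 0‖ ^ 2 / 4 - ε ^ 2 * ‖A 0‖ ^ 2 / 6)| ≤ 4000 * K ^ 4 * δ ^ 4 := by
  have hK := C.hK
  have hK0 : 0 ≤ K := by linarith
  have hδ1 : δ ≤ 1 / 64 := by nlinarith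
  have hP := nu_prob σ ε hσ0 hε0
  have r0 : ∀ s ∈ Ioo (-ε) ε, K * |0 + s| ≤ 1 := by
    intro s hs
    have : |0 + s| ≤ δ := by rw [zero_add, abs_le]; constructor <;> linarith [hs.1, hs.2]
    nlinarith
  have r1 : ∀ s ∈ Ioo (-ε) ε, K * |δ + s| ≤ 1 := by
    intro s hs
    have : |δ + s| ≤ 2 * δ := by rw [abs_le]; constructor <;> linarith [hs.1, hs.2]
    nlinarith
  have hKσ : K * σ < 1 := by nlinarith
  obtain ⟨e0, _, k0⟩ := C.tube 0 σ ε r0 hKσ hσ0 i0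
  obtain ⟨e1, _, k1⟩ := C.tube δ σ ε r1 hKσ hσ0 i1
  obtain ⟨w0, nu, iwu, hcur⟩ := C.chord δ hδ hKδ _ _ rfl rfl
  have mean0 := fun u hu => C.mean 0 σ ε r0 (by norm_num) hε0 (by linarith) hKσ hσ0 i0 u hu
  have mean1 := fun u hu => C.mean δ σ ε r1 ⟨by linarith, by linarith⟩ hε0 (by linarith) hKσ hσ0 i1 u hu
  have mPS : ∀ t, Measurable (PS γ T v1 v2 t ∘ UF T A v1 v2 t σ) := fun t => by
    obtain ⟨m1, m2, m3, m4, m5⟩ := C.meas t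
    exact (psi_meas _ _ _ m1 m2 m3).comp (unflat_meas _ _ σ m4 m5)
  have fl := nu_flip σ ε 0
  set ν := normRestrict (cyl σ ε) with hν
  set F0 := PS γ T v1 v2 0 ∘ UF T A v1 v2 0 σ with hF0
  set F1 := (PS γ T v1 v2 δ ∘ UF T A v1 v2 δ σ) ∘ flipE 0 with hF1
  have mF0 : Measurable F0 := mPS 0
  have mF1 : Measurable F1 := (mPS δ).comp fl.measurable
  have e1' : normRestrict (PS γ T v1 v2 δ '' cyl σ ε) = ν.map F1 := by
    rw [e1, hF1, ← Measure.map_map (mPS δ) fl.measurable, fl.map_eq]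
  set w := γ δ - γ 0 with hw
  set u := ‖w‖⁻¹ • w with hu
  have mean0 := mean0 u nu
  have mean1 := mean1 u nu
  have mu : Measurable (fun z : E3 => (inner ℝ z u : ℝ)) := by fun_prop
  rw [e0] at mean0 ⊢
  rw [e1'] at mean1 ⊢
  rw [integral_map mF0.aemeasurable mu.aestronglyMeasurable] at mean0
  rw [integral_map mF1.aemeasurable mu.aestronglyMeasurable] at mean1
  have b0 : ∀ q ∈ cyl σ ε, ‖F0 q‖ ≤ K + 2 := fun q hq =>
    C.PS_bd 0 σ ε r0 hσ0 (by linarith) _ (C.pt 0 σ ε r0 k0 q hq).1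
  have b1 : ∀ q ∈ cyl σ ε, ‖F1 q‖ ≤ K + 2 := fun q hq =>
    C.PS_bd δ σ ε r1 hσ0 (by linarith) _ (C.pt δ σ ε r1 k1 _ (flip_mem σ ε 0 q hq)).1
  have I0 : Integrable (fun q => (inner ℝ (F0 q) u : ℝ)) ν :=
    nu_integrable σ ε hσ0 hε0 _ (mu.comp mF0) (K + 2) fun q hq => inner_le_u _ u nu _ (b0 q hq)
  have I1 : Integrable (fun q => (inner ℝ (F1 q) u : ℝ)) ν :=
    nu_integrable σ ε hσ0 hε0 _ (mu.comp mF1) (K + 2) fun q hq => inner_le_u _ u nu _ (b1 q hq)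
  have Md : ∫ q, (inner ℝ (F1 q - F0 q) u : ℝ) ∂ν = ∫ q, (inner ℝ (F1 q) u : ℝ) ∂ν - ∫ q, (inner ℝ (F0 q) u : ℝ) ∂ν := by
    rw [← integral_sub I1 I0]
    simp only [inner_sub_left]
  have Id : Integrable (fun q => (inner ℝ (F1 q - F0 q) u : ℝ)) ν := by
    simp only [inner_sub_left]; exact I1.sub I0
  have lower := le_W1_of_maps ν F0 F1 mF0 mF1 (K + 2)
    (by filter_upwards [nu_ae σ ε] with q hq using b0 q hq)
    (by filter_upwards [nu_ae σ ε] with q hq using b1 q hq) u nu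
  have upper := W1_le_of_maps ν F0 F1 mF0 mF1 (continuous_fst.dist continuous_snd).measurable
  have ptw : ∀ q ∈ cyl σ ε, dist (F0 q) (F1 q) ≤ inner ℝ (F1 q - F0 q) u + 3200 * K ^ 4 * δ ^ 5 := by
    intro q hq
    have hq' := flip_mem σ ε 0 q hq
    obtain ⟨p1, p2, p3⟩ := C.pt 0 σ ε r0 k0 q hq
    obtain ⟨s1, s2, s3⟩ := C.pt δ σ ε r1 k1 _ hq'
    have f0 : flipE 0 q 0 = - q 0 := by simp [flipE_apply]
    have f1 : flipE 0 q 1 = q 1 := by simp [flipE_apply]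
    have f2 : flipE 0 q 2 = q 2 := by simp [flipE_apply]
    have c0 := C.curv 0 (q 0) (r0 _ hq.1)
    have c1 := C.curv δ (flipE 0 q 0) (r1 _ hq'.1)
    have uc := unc_close _ _ _ _ _ _ _ _ (q 1) (q 2) _ _ σ K hσ0 hK0 s1.2 p1.2 s3 p3
      (by rw [UF_1, f1]) (by rw [UF_2, f2]) (UF_1 _ _ _) (UF_2 _ _ _)
      c1.2.2.1 c1.2.2.2 c0.2.2.1 c0.2.2.2
    have sq := sq_le_of_cyl σ ε q hq
    rw [dist_comm, dist_eq_norm]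
    refine coupling_bound γ T A B v1 v2 K δ (q 0) (q 1) (q 2) (unc (kk T A v1 0) (kk T A v2 0) σ q)
      (unc (kk T A v1 δ) (kk T A v2 δ) σ (flipE 0 q)) C.hγT C.hTA C.hAB C.hT C.o1 C.o2 C.oT1 C.oT2
      C.bA C.bB hK hδ hKδ ((abs_le_of_sq_le_sq sq.1 hε0.le).trans hε)
      ((abs_le_of_sq_le_sq sq.2.1 hσ0.le).trans hσ) ((abs_le_of_sq_le_sq sq.2.2 hσ0.le).trans hσ)
      (uc.2.trans ?_) (uc.1.trans ?_) u rfl _ ?_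
    · nlinarith
    · have : σ ^ 3 ≤ (δ / 4) ^ 3 := pow_le_pow_left₀ hσ0.le hσ 3
      have := mul_le_mul_of_nonneg_left this hK0
      have : 0 ≤ K * δ ^ 3 := by positivity
      linarith
    · change PS γ T v1 v2 δ (UF T A v1 v2 δ σ (flipE 0 q)) - PS γ T v1 v2 0 (UF T A v1 v2 0 σ q) = _
      rw [p2, s2, f0, f1, f2]
  have up2 : ∫ q, dist (F0 q) (F1 q) ∂ν ≤ ∫ q, (inner ℝ (F1 q - F0 q) u : ℝ) ∂ν + 3200 * K ^ 4 * δ ^ 5 := by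
    have : ∫ q, ((inner ℝ (F1 q - F0 q) u : ℝ) + 3200 * K ^ 4 * δ ^ 5) ∂ν =
        ∫ q, (inner ℝ (F1 q - F0 q) u : ℝ) ∂ν + 3200 * K ^ 4 * δ ^ 5 := by
      rw [integral_add Id (integrable_const _)]; simp
    rw [← this]
    refine integral_mono_ae ?_ (Id.add (integrable_const _)) ?_
    · refine nu_integrable σ ε hσ0 hε0 _ (mF0.dist mF1) ((K + 2) + (K + 2)) fun q hq => ?_
      rw [abs_of_nonneg dist_nonneg, dist_eq_norm]
      exact (norm_sub_le _ _).trans (add_le_add (b0 q hq) (b1 q hq))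
    · filter_upwards [nu_ae σ ε] with q hq using ptw q hq
  have hM : inner ℝ (γ δ) u - inner ℝ (γ 0) u = ‖w‖ := by rw [← inner_sub_left]; exact iwu
  rw [norm_sub_rev, ← hw]
  generalize W1 (ν.map F0) (ν.map F1) = W at *
  generalize ∫ q, (inner ℝ (F1 q - F0 q) u : ℝ) ∂ν = M at *
  generalize ∫ q, (inner ℝ (F1 q) u : ℝ) ∂ν = M1 at *
  generalize ∫ q, (inner ℝ (F0 q) u : ℝ) ∂ν = M0 at *
  generalize ∫ q, dist (F0 q) (F1 q) ∂ν = Dd at *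
  exact final_arith W M M1 M0 Dd δ σ ε K _ _ _ _ _ _ hK hδ hδ1 hσ0 hσ hε0 hε mean0 mean1 hcur Md lower upper up2 hM
end

/-- Coarse extrinsic curvature expansion for a space curve:
`W₁(μ_{x₀}^{σ,ε}, μ_y^{σ,ε}) = ‖x₀ − y‖ (1 + σ²/(4R²) − ε²/(6R²)) + O(δ⁴)`. -/
theorem space_curve_wasserstein_expansion
    (δ₀ : ℝ) (hδ₀ : 0 < δ₀)
    (γ : ℝ → EuclideanSpace ℝ (Fin 3)) (hγ : ContDiff ℝ (⊤ : ℕ∞) γ)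
    (hunit : ∀ α : ℝ, ‖deriv γ α‖ = 1)
    (hcurv : ∀ α ∈ Icc (-δ₀) (2 * δ₀), deriv (deriv γ) α ≠ 0)
    (R : ℝ → ℝ) (hR : ∀ α : ℝ, R α = ‖deriv (deriv γ) α‖⁻¹)
    (n : ℝ → EuclideanSpace ℝ (Fin 3)) (hn : ∀ α : ℝ, n α = R α • deriv (deriv γ) α)
    (b : ℝ → EuclideanSpace ℝ (Fin 3)) (hb : ∀ α : ℝ, b α = cross3 (deriv γ α) (n α))
    (Ψ : ℝ × ℝ × ℝ → EuclideanSpace ℝ (Fin 3))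
    (hΨ : ∀ p : ℝ × ℝ × ℝ, Ψ p = γ p.1 + p.2.1 • n p.1 + p.2.2 • b p.1)
    (hinj : InjOn Ψ {p : ℝ × ℝ × ℝ |
      p.1 ∈ Icc (-δ₀) (2 * δ₀) ∧ p.2.1 ^ 2 + p.2.2 ^ 2 ≤ δ₀ ^ 2})
    (μ : ℝ → ℝ → ℝ → Measure (EuclideanSpace ℝ (Fin 3)))
    (hμ : ∀ t σ ε : ℝ, μ t σ ε = normRestrict (Ψ '' {p : ℝ × ℝ × ℝ |
      p.1 ∈ Ioo (t - ε) (t + ε) ∧ p.2.1 ^ 2 + p.2.2 ^ 2 < σ ^ 2})) :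
    ∃ C > (0:ℝ), ∃ δ₁ ∈ Ioc (0:ℝ) δ₀, ∀ δ ∈ Ioc (0:ℝ) δ₁, ∀ σ ε : ℝ,
      0 < σ → 0 < ε → max σ ε ≤ δ / 4 →
      |W1 (μ 0 σ ε) (μ δ σ ε) -
        ‖γ 0 - γ δ‖ * (1 + σ ^ 2 / (4 * R 0 ^ 2) - ε ^ 2 / (6 * R 0 ^ 2))| ≤ C * δ ^ 4 := by
  have S0 : ∀ f : ℝ → EuclideanSpace ℝ (Fin 3), ContDiff ℝ (⊤ : ℕ∞) f →
      (∀ α, HasDerivAt f (deriv f α) α) ∧ ContDiff ℝ (⊤ : ℕ∞) (deriv f) := by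
    intro f hf
    have := contDiff_infty_iff_deriv.1 hf
    exact ⟨fun α => (this.1 α).hasDerivAt, this.2⟩
  obtain ⟨d1, s1⟩ := S0 γ hγ
  obtain ⟨d2, s2⟩ := S0 _ s1
  obtain ⟨d3, s3⟩ := S0 _ s2
  obtain ⟨d4, s4⟩ := S0 _ s3
  have bd : ∀ f : ℝ → EuclideanSpace ℝ (Fin 3), Continuous f → ∃ M : ℝ, ∀ s ∈ Icc (-3:ℝ) 3, ‖f s‖ ≤ M :=
    fun f hf => isCompact_Icc.exists_bound_of_continuousOn hf.continuousOn
  obtain ⟨M0, h0⟩ := bd γ hγ.continuous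
  obtain ⟨M1, h1⟩ := bd _ s2.continuous
  obtain ⟨M2, h2⟩ := bd _ s3.continuous
  obtain ⟨M3, h3⟩ := bd _ s4.continuous
  have onf : ∀ α ∈ Icc (-δ₀) (2 * δ₀), ONF (deriv γ α) (n α) (b α) := fun α hα =>
    nb_ONF _ (deriv (deriv γ) α) _ _ (hunit α) (hcurv α hα) (A_perp _ _ d2 hunit α) (by rw [hn, hR]) (hb α)
  obtain ⟨a1, a2, a3, a4, a5, a6⟩ := onf 0 ⟨by linarith, by linarith⟩
  obtain ⟨K, hK, k0, k1, k2, k3⟩ : ∃ K : ℝ, 1 ≤ K ∧ M0 ≤ K ∧ M1 ≤ K ∧ M2 ≤ K ∧ M3 ≤ K :=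
    ⟨max 1 (max M0 (max M1 (max M2 M3))), by simp, by simp, by simp, by simp, by simp⟩
  have C : Crv γ (deriv γ) (deriv (deriv γ)) (deriv (deriv (deriv γ))) (deriv (deriv (deriv (deriv γ))))
      (n 0) (b 0) K :=
    ⟨d1, d2, d3, d4, hunit, a2, a3, a6, a4, a5, fun s hs => (h0 s hs).trans k0, fun s hs => (h1 s hs).trans k1,
      fun s hs => (h2 s hs).trans k2, fun s hs => (h3 s hs).trans k3, hK⟩
  have hKp : 0 < K := by linarith
  refine ⟨4000 * K ^ 4, by positivity, min δ₀ (1 / (64 * K)), ⟨lt_min hδ₀ (by positivity), min_le_left _ _⟩, ?_⟩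
  rintro δ ⟨hδ, hδ1⟩ σ ε hσ hε hm
  have hd0 : δ ≤ δ₀ := hδ1.trans (min_le_left _ _)
  have hKδ : K * δ ≤ 1 / 64 := by
    have := mul_le_mul_of_nonneg_left (hδ1.trans (min_le_right _ _)) hKp.le
    rwa [show K * (1 / (64 * K)) = 1 / 64 by field_simp] at this
  have hσ4 : σ ≤ δ / 4 := (le_max_left _ _).trans hm
  have hε4 : ε ≤ δ / 4 := (le_max_right _ _).trans hm
  have key : ∀ t, 0 ≤ t → t ≤ δ → μ t σ ε = normRestrict (PS γ (deriv γ) (n 0) (b 0) t '' cyl σ ε) ∧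
      InjOn (PS γ (deriv γ) (n 0) (b 0) t) (cyl σ ε) := by
    intro t t0 t1
    have r : ∀ s ∈ Ioo (-ε) ε, t + s ∈ Icc (-δ₀) (2 * δ₀) := fun s hs =>
      ⟨by linarith [hs.1], by linarith [hs.2]⟩
    have := tube_set γ (deriv γ) n b (fr (deriv γ) (n 0)) (fr (deriv γ) (b 0)) Ψ δ₀ t σ ε hΨ hinj r
      (by nlinarith) (fun s hs => onf _ (r s hs)) (fun s hs => C.onf _ (by
        have : |t + s| ≤ 2 * δ := by rw [abs_le]; constructor <;> linarith [hs.1, hs.2]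
        nlinarith))
    rw [hμ, this.1]
    exact ⟨rfl, this.2⟩
  obtain ⟨e0, j0⟩ := key 0 le_rfl hδ.le
  obtain ⟨e1, j1⟩ := key δ hδ.le le_rfl
  have := C.core δ σ ε hδ hKδ hσ hσ4 hε hε4 j0 j1
  rw [e0, e1, hR]
  have x : ∀ c z : ℝ, z ^ 2 / (c * ‖deriv (deriv γ) 0‖⁻¹ ^ 2) = z ^ 2 * ‖deriv (deriv γ) 0‖ ^ 2 / c := by
    intro c z
    rw [inv_pow, ← div_eq_mul_inv, div_div_eq_mul_div]
  rw [x, x]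
  exact this
end

section
/- Let R > 0 and let the test measures μ_t^{σ,ε} be as in the circle setup. Then for every δ ∈ (0, πR] and all σ, ε > 0 with max(σ, ε) ≤ δ/2 and σ < R, one has the exact identity W₁(μ_0^{σ,ε}, μ_δ^{σ,ε}) = 2R²·sin(δ/(2R))·(1/ε)·sin(ε/R)·(1 + σ²/(3R²)); equivalently, writing x₀ = Φ(0, 0) = (R, 0) and y = Φ(δ, 0) = (R·cos(δ/R), R·sin(δ/R)), W₁(μ_0^{σ,ε}, μ_δ^{σ,ε}) = ‖x₀ − y‖·(R/ε)·sin(ε/R)·(1 + σ²/(3R²)). -/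
open MeasureTheory Set

abbrev E2 := EuclideanSpace ℝ (Fin 2)

lemma W1_eq_of (μ : Measure E2) [IsProbabilityMeasure μ] (S : E2 → E2) (hS : Measurable S)
    (g : E2 → ℝ) (hgc : Continuous g) (hg : ∀ x y, g y - g x ≤ dist x y)
    (hgn : ∀ x, |g x| ≤ ‖x‖)
    (hi : Integrable (fun z => ‖z‖) μ) (hi' : Integrable (fun z => ‖S z‖) μ)
    (hd : ∀ᵐ z ∂μ, dist z (S z) = g (S z) - g z) :
    W1 μ (μ.map S) = ∫ z, (g (S z) - g z) ∂μ := by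
  have key : ∀ π : Measure (E2 × E2), π.map Prod.fst = μ → π.map Prod.snd = μ.map S →
      ∫ z, (g (S z) - g z) ∂μ ≤ ∫ p, dist p.1 p.2 ∂π := by
    intro π h1 h2
    have i1 : Integrable (fun p : E2 × E2 => ‖p.1‖) π := by
      rw [← h1] at hi
      exact hi.comp_measurable measurable_fst
    have i2 : Integrable (fun p : E2 × E2 => ‖p.2‖) π := by
      have : Integrable (fun z => ‖z‖) (μ.map S) := by
        rw [integrable_map_measure (by fun_prop) hS.aemeasurable]; exact hi'
      rw [← h2] at this
      exact this.comp_measurable measurable_snd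
    have g1 : Integrable (fun p : E2 × E2 => g p.1) π :=
      i1.mono' (by fun_prop) (.of_forall fun p => hgn _)
    have g2 : Integrable (fun p : E2 × E2 => g p.2) π :=
      i2.mono' (by fun_prop) (.of_forall fun p => hgn _)
    have idist : Integrable (fun p : E2 × E2 => dist p.1 p.2) π := by
      refine (i1.add i2).mono' (by fun_prop) (.of_forall fun p => ?_)
      simp only [Real.norm_eq_abs, abs_of_nonneg dist_nonneg, Pi.add_apply]
      rw [dist_eq_norm]; exact norm_sub_le _ _
    have e1 : ∫ p, g p.1 ∂π = ∫ z, g z ∂μ := by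
      rw [← h1, integral_map (by fun_prop) (by fun_prop)]
    have e2 : ∫ p, g p.2 ∂π = ∫ z, g (S z) ∂μ := by
      rw [← integral_map (f := g) hS.aemeasurable (by fun_prop), ← h2,
        integral_map (by fun_prop) (by fun_prop)]
    rw [integral_sub, ← e1, ← e2, ← integral_sub g2 g1]
    · exact integral_mono (g2.sub g1) idist fun p => hg _ _
    · exact hi'.mono' (hgc.measurable.comp hS).aestronglyMeasurable (.of_forall fun p => hgn _)
    · exact hi.mono' (by fun_prop) (.of_forall fun p => hgn _)
  have hm : Measurable (fun z => (z, S z)) := by fun_prop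
  apply le_antisymm
  · refine csInf_le ⟨∫ z, (g (S z) - g z) ∂μ, ?_⟩ ?_
    · rintro c ⟨π, _, h1, h2, rfl⟩; exact key π h1 h2
    · refine ⟨μ.map (fun z => (z, S z)), Measure.isProbabilityMeasure_map hm.aemeasurable, ?_, ?_, ?_⟩
      · rw [Measure.map_map measurable_fst hm]; exact Measure.map_id
      · rw [Measure.map_map measurable_snd hm]; rfl
      · rw [integral_map hm.aemeasurable (by fun_prop)]
        exact integral_congr_ae (hd.mono fun z hz => hz.symm)
  · refine le_csInf ⟨_, μ.map (fun z => (z, S z)), Measure.isProbabilityMeasure_map hm.aemeasurable, ?_, ?_, rfl⟩ ?_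
    · rw [Measure.map_map measurable_fst hm]; exact Measure.map_id
    · rw [Measure.map_map measurable_snd hm]; rfl
    · rintro c ⟨π, _, h1, h2, rfl⟩; exact key π h1 h2

noncomputable def eE : (ℝ × ℝ) ≃ᵐ E2 :=
  MeasurableEquiv.finTwoArrow.symm.trans (MeasurableEquiv.toLp 2 (Fin 2 → ℝ))

lemma eE_apply (q : ℝ × ℝ) : eE q = !₂[q.1, q.2] := by
  ext i; fin_cases i <;> rfl

lemma eE_mp : MeasurePreserving eE volume volume :=
  (PiLp.volume_preserving_toLp (Fin 2)).comp ((volume_preserving_finTwoArrow ℝ).symm _)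

lemma polar_setIntegral (a b c : ℝ) (ha : 0 < a) (hc : c < Real.pi) (f : E2 → ℝ)  :
    MeasurableSet (eE '' (polarCoord.symm '' (Ioo a b ×ˢ Ioo (-c) c))) ∧
    ∫ z in eE '' (polarCoord.symm '' (Ioo a b ×ˢ Ioo (-c) c)), f z =
      ∫ p in Ioo a b ×ˢ Ioo (-c) c, p.1 * f !₂[p.1 * Real.cos p.2, p.1 * Real.sin p.2] := by
  have hsub : Ioo a b ×ˢ Ioo (-c) c ⊆ polarCoord.target := by
    rintro ⟨r, t⟩ ⟨⟨h1, h2⟩, h3, h4⟩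
    simp only [polarCoord_target, mem_prod, mem_Ioi, mem_Ioo] at *
    refine ⟨by linarith, by linarith, by linarith⟩
  have hopen : IsOpen (polarCoord.symm '' (Ioo a b ×ˢ Ioo (-c) c)) :=
    polarCoord.symm.isOpen_image_of_subset_source (isOpen_Ioo.prod isOpen_Ioo) hsub
  refine ⟨eE.measurableEmbedding.measurableSet_image.2 hopen.measurableSet, ?_⟩
  rw [eE_mp.setIntegral_image_emb eE.measurableEmbedding, ← integral_indicator hopen.measurableSet,
    ← integral_comp_polarCoord_symm]
  have : ∀ p ∈ polarCoord.target,
      p.1 • (polarCoord.symm '' (Ioo a b ×ˢ Ioo (-c) c)).indicator (fun x => f (eE x)) (polarCoord.symm p)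
      = (Ioo a b ×ˢ Ioo (-c) c).indicator (fun p => p.1 * f !₂[p.1 * Real.cos p.2, p.1 * Real.sin p.2]) p := by
    intro p hp
    have hiff : polarCoord.symm p ∈ polarCoord.symm '' (Ioo a b ×ˢ Ioo (-c) c) ↔
        p ∈ Ioo a b ×ˢ Ioo (-c) c := by
      constructor
      · rintro ⟨q, hq, h⟩
        rwa [← polarCoord.symm.injOn (hsub hq) hp h]
      · exact fun h => ⟨p, h, rfl⟩
    by_cases h : p ∈ Ioo a b ×ˢ Ioo (-c) c
    · rw [indicator_of_mem h, indicator_of_mem (hiff.2 h), eE_apply]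
      simp
    · rw [indicator_of_notMem h, indicator_of_notMem (fun h' => h (hiff.1 h'))]
      simp
  rw [setIntegral_congr_fun polarCoord.open_target.measurableSet this,
    setIntegral_indicator (measurableSet_Ioo.prod measurableSet_Ioo),
    inter_eq_self_of_subset_right hsub]

lemma normRestrict_image (S : E2 ≃ₗᵢ[ℝ] E2) (A : Set E2) :
    normRestrict (S '' A) = (normRestrict A).map S := by
  have hS := S.measurePreserving
  have he : MeasurableEmbedding S := S.toHomeomorph.measurableEmbedding
  have h := hS.restrict_image_emb he A
  have hv : volume (S '' A) = volume A := by
    have := congrArg (fun m => m univ) h.map_eq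
    simp only [Measure.restrict_apply_univ] at this
    rw [← this, Measure.map_apply h.measurable MeasurableSet.univ]; simp
  rw [normRestrict, normRestrict, hv, Measure.map_smul, h.map_eq]

/-- Exact Wasserstein distance between two test measures on an annular neighbourhood of a
circle of radius `R`. -/
theorem circle_wasserstein_exact
    (R : ℝ) (hR : 0 < R)
    (Φ : ℝ × ℝ → EuclideanSpace ℝ (Fin 2))
    (hΦ : ∀ p : ℝ × ℝ, Φ p = (WithLp.equiv 2 (Fin 2 → ℝ)).symm
      ![(R - p.2) * Real.cos (p.1 / R), (R - p.2) * Real.sin (p.1 / R)])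
    (μ : ℝ → ℝ → ℝ → Measure (EuclideanSpace ℝ (Fin 2)))
    (hμ : ∀ t σ ε : ℝ, μ t σ ε = normRestrict (Φ '' (Ioo (t - ε) (t + ε) ×ˢ Ioo (-σ) σ))) :
    ∀ δ ∈ Ioc (0:ℝ) (Real.pi * R), ∀ σ ε : ℝ, 0 < σ → 0 < ε →
      max σ ε ≤ δ / 2 → σ < R →
      W1 (μ 0 σ ε) (μ δ σ ε) =
        2 * R ^ 2 * Real.sin (δ / (2 * R)) * (1 / ε) * Real.sin (ε / R) *
          (1 + σ ^ 2 / (3 * R ^ 2)) ∧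
      W1 (μ 0 σ ε) (μ δ σ ε) =
        ‖Φ (0, 0) - Φ (δ, 0)‖ * (R / ε) * Real.sin (ε / R) *
          (1 + σ ^ 2 / (3 * R ^ 2)) := by
  intro δ ⟨hδ0, hδ1⟩ σ ε hσ hε hmax hσR
  have hεδ : ε ≤ δ / 2 := (le_max_right _ _).trans hmax
  have hpi := Real.pi_pos
  set θ := δ / (2 * R) with hθ
  set c := ε / R with hc
  have hc0 : 0 < c := by positivity
  have hcθ : c ≤ θ := by
    rw [hc, hθ, div_le_div_iff₀ hR (by positivity)]; nlinarith
  have hθpi : θ ≤ Real.pi / 2 := by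
    rw [hθ, div_le_iff₀ (by positivity)]; linarith
  have hθ0 : 0 < θ := hc0.trans_le hcθ
  have hsinθ : 0 < Real.sin θ := Real.sin_pos_of_pos_of_lt_pi hθ0 (by linarith)
  have hδR : δ / R = 2 * θ := by rw [hθ]; field_simp
  have hΦ' : ∀ a b, Φ (a, b) = !₂[(R - b) * Real.cos (a / R), (R - b) * Real.sin (a / R)] :=
    fun a b => hΦ (a, b)
  set A := Φ '' (Ioo (0 - ε) (0 + ε) ×ˢ Ioo (-σ) σ) with hA
  have hAe : A = eE '' (polarCoord.symm '' (Ioo (R - σ) (R + σ) ×ˢ Ioo (-c) c)) := by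
    ext z
    constructor
    · rintro ⟨⟨a, b⟩, ⟨⟨h1, h2⟩, h3, h4⟩, rfl⟩
      simp only at h1 h2 h3 h4
      refine ⟨_, ⟨(R - b, a / R), ⟨⟨by simp only; linarith, by simp only; linarith⟩, ?_, ?_⟩, rfl⟩, ?_⟩
      · simp only; rw [hc, ← neg_div, div_lt_div_iff_of_pos_right hR]; linarith
      · simp only; rw [hc, div_lt_div_iff_of_pos_right hR]; linarith
      · rw [eE_apply, hΦ']; rfl
    · rintro ⟨_, ⟨⟨r, t⟩, ⟨⟨h1, h2⟩, h3, h4⟩, rfl⟩, rfl⟩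
      simp only at h1 h2 h3 h4
      have hcR : c * R = ε := by rw [hc]; field_simp
      refine ⟨(t * R, R - r), ⟨⟨?_, ?_⟩, ?_, ?_⟩, ?_⟩
      · simp only; nlinarith
      · simp only; nlinarith
      · simp only; linarith
      · simp only; linarith
      · rw [eE_apply, hΦ', mul_div_cancel_right₀ _ hR.ne']; simp
  have hpol := fun f => polar_setIntegral (R - σ) (R + σ) c (by linarith) (by linarith) f
  rw [← hAe] at hpol
  have hAm : MeasurableSet A := (hpol 0).1
  have hnorm : ∀ a b, b < R → ‖Φ (a, b)‖ = R - b := by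
    intro a b hb
    rw [hΦ', EuclideanSpace.norm_eq, Fin.sum_univ_two]
    simp only [Real.norm_eq_abs, sq_abs]
    rw [Real.sqrt_eq_iff_mul_self_eq (by positivity) (by linarith)]
    simp only [Matrix.cons_val_zero, Matrix.cons_val_one]
    linear_combination ((R-b)^2) * (Real.sin_sq_add_cos_sq (a / R))
  have hAb : ∀ z ∈ A, ‖z‖ ≤ R + σ := by
    rintro _ ⟨⟨a, b⟩, ⟨_, h3, h4⟩, rfl⟩
    simp only at h3 h4
    rw [hnorm _ _ (by linarith)]; linarith
  have hfin : volume A ≠ ⊤ := by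
    refine ne_top_of_le_ne_top (measure_closedBall_lt_top (x := (0:E2)) (r := R + σ)).ne
      (measure_mono fun z hz => ?_)
    simpa using hAb z hz
  have hvol : volume.real A = 4 * σ * ε := by
    have h := (hpol fun _ => 1).2
    rw [setIntegral_const, smul_eq_mul, mul_one] at h
    rw [h]
    rw [Measure.volume_eq_prod, setIntegral_prod_mul (fun r : ℝ => r) (fun _ => (1:ℝ))]
    rw [← integral_Ioc_eq_integral_Ioo, ← integral_Ioc_eq_integral_Ioo,
      ← intervalIntegral.integral_of_le (by linarith), ← intervalIntegral.integral_of_le (by linarith)]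
    simp only [integral_id, intervalIntegral.integral_const, smul_eq_mul]
    rw [hc]; field_simp; ring
  have hvol' : (volume A)⁻¹.toReal = (4 * σ * ε)⁻¹ := by
    rw [ENNReal.toReal_inv, ← hvol]; rfl
  have hne : volume A ≠ 0 := by
    intro h
    have : volume.real A = 0 := by simp [Measure.real, h]
    rw [hvol] at this
    have : 0 < 4 * σ * ε := by positivity
    linarith
  let n : E2 := !₂[-Real.sin θ, Real.cos θ]
  have hn : ‖n‖ = 1 := by
    rw [EuclideanSpace.norm_eq, Fin.sum_univ_two]
    simp [n]
  let S : E2 ≃ₗᵢ[ℝ] E2 := Submodule.reflection (Submodule.span ℝ {n})ᗮ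
  have hSa : ∀ z, S z = z - (2 * inner ℝ n z) • n := by
    intro z
    simp only [S, Submodule.reflection_orthogonal_apply, Submodule.reflection_singleton_apply, hn]
    simp [two_smul, add_smul, two_mul]
  have hin : ∀ z : E2, inner ℝ n z = - Real.sin θ * z 0 + Real.cos θ * z 1 := by
    intro z
    simp only [n, PiLp.inner_apply, Fin.sum_univ_two]
    simp; ring
  have hSΦ : ∀ a b, S (Φ (a, b)) = Φ (δ - a, b) := by
    intro a b
    rw [hSa, hin, hΦ', hΦ', sub_div, hδR]
    rw [Real.cos_sub, Real.sin_sub, Real.sin_two_mul, Real.cos_two_mul]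
    have := Real.sin_sq_add_cos_sq θ
    ext i; fin_cases i
    · simp [n]; linear_combination (-2 * (R-b) * Real.cos (a/R)) * this
    · simp [n]; ring
  have hSA : Φ '' (Ioo (δ - ε) (δ + ε) ×ˢ Ioo (-σ) σ) = S '' A := by
    ext z
    constructor
    · rintro ⟨⟨a, b⟩, ⟨⟨h1, h2⟩, h3⟩, rfl⟩
      simp only at h1 h2
      refine ⟨_, ⟨(δ - a, b), ⟨⟨by simp only; linarith, by simp only; linarith⟩, h3⟩, rfl⟩, ?_⟩
      rw [hSΦ]; simp
    · rintro ⟨_, ⟨⟨a, b⟩, ⟨⟨h1, h2⟩, h3⟩, rfl⟩, rfl⟩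
      simp only at h1 h2
      exact ⟨(δ - a, b), ⟨⟨by simp only; linarith, by simp only; linarith⟩, h3⟩, (hSΦ a b).symm⟩
  have hinA : ∀ z ∈ A, inner ℝ n z ≤ 0 := by
    rintro _ ⟨⟨a, b⟩, ⟨⟨h1, h2⟩, h3, h4⟩, rfl⟩
    simp only at h1 h2 h3 h4
    have e : inner ℝ n (Φ (a, b)) = -((R - b) * Real.sin (θ - a / R)) := by
      rw [hin, hΦ', Real.sin_sub]; simp; ring
    have k1 : a / R < c := by rw [hc, div_lt_div_iff_of_pos_right hR]; linarith
    have k2 : -c < a / R := by rw [hc, ← neg_div, div_lt_div_iff_of_pos_right hR]; linarith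
    have := Real.sin_nonneg_of_nonneg_of_le_pi (x := θ - a / R) (by linarith) (by linarith)
    have : 0 ≤ (R - b) * Real.sin (θ - a / R) := mul_nonneg (by linarith) this
    linarith
  have hprob : IsProbabilityMeasure (normRestrict A) := by
    refine ⟨?_⟩
    simp [normRestrict, ENNReal.inv_mul_cancel hne hfin]
  have hae : ∀ᵐ z ∂(normRestrict A), z ∈ A :=
    Measure.ae_smul_measure (ae_restrict_mem hAm) _
  have hi : Integrable (fun z => ‖z‖) (normRestrict A) :=
    Integrable.of_bound (by fun_prop) (R + σ) (hae.mono fun z hz => by simpa using hAb z hz)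
  have hgS : ∀ z, inner ℝ n (S z) = - inner ℝ n z := by
    intro z
    rw [hSa, inner_sub_right, inner_smul_right, real_inner_self_eq_norm_sq, hn]; ring
  have hW := W1_eq_of (normRestrict A) S S.continuous.measurable (fun z => inner ℝ n z)
    (by fun_prop) (fun x y => by
      rw [← inner_sub_right, dist_comm, dist_eq_norm]
      exact (real_inner_le_norm _ _).trans (by rw [hn, one_mul]))
    (fun x => (abs_real_inner_le_norm _ _).trans (by rw [hn, one_mul])) hi
    (by simpa using hi)
    (hae.mono fun z hz => by
      rw [hgS, dist_eq_norm, hSa, sub_sub_cancel, norm_smul, hn, Real.norm_eq_abs,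
        abs_of_nonpos (by linarith [hinA z hz])]; ring)
  have hint : ∫ z, (inner ℝ n (S z) - inner ℝ n z) ∂(normRestrict A) =
      2 * R ^ 2 * Real.sin θ * (1 / ε) * Real.sin c * (1 + σ ^ 2 / (3 * R ^ 2)) := by
    rw [normRestrict, integral_smul_measure, hvol', (hpol _).2]
    have : ∀ p : ℝ × ℝ, p.1 * (inner ℝ n (S !₂[p.1 * Real.cos p.2, p.1 * Real.sin p.2]) - inner ℝ n !₂[p.1 * Real.cos p.2, p.1 * Real.sin p.2]) = (2 * p.1 ^ 2) * Real.sin (θ - p.2) := by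
      intro p
      rw [hgS, hin, Real.sin_sub]; simp; ring
    simp only [this]
    rw [Measure.volume_eq_prod, setIntegral_prod_mul (fun r : ℝ => 2 * r ^ 2) (fun t => Real.sin (θ - t))]
    rw [← integral_Ioc_eq_integral_Ioo, ← integral_Ioc_eq_integral_Ioo,
      ← intervalIntegral.integral_of_le (by linarith), ← intervalIntegral.integral_of_le (by linarith)]
    rw [intervalIntegral.integral_const_mul, integral_pow,
      intervalIntegral.integral_comp_sub_left (fun x => Real.sin x), integral_sin, sub_neg_eq_add,
      Real.cos_sub, Real.cos_add, smul_eq_mul]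
    field_simp
    push_cast
    ring
  have hmain : W1 (μ 0 σ ε) (μ δ σ ε) =
      2 * R ^ 2 * Real.sin θ * (1 / ε) * Real.sin c * (1 + σ ^ 2 / (3 * R ^ 2)) := by
    rw [hμ, hμ, hSA, ← hA, normRestrict_image, hW, hint]
  refine ⟨hmain, ?_⟩
  have hdist : ‖Φ (0, 0) - Φ (δ, 0)‖ = 2 * R * Real.sin θ := by
    have h1 := hSΦ 0 0
    rw [sub_zero] at h1
    rw [← h1, hSa, sub_sub_cancel, norm_smul, hn, hin, hΦ']
    simp only [Real.norm_eq_abs]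
    simp [abs_of_pos hsinθ, abs_of_pos hR]; ring
  rw [hmain, hdist]
  ring
end
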